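/- arXiv:2102.07714 — 8 statements merged into one kernel-verified Lean document; each statement's English description precedes it below -/
import Mathlib

section
/- Let μ be a Borel probability measure on ℝ and 0 < α < 1, and define ψ_{α,μ}(r) := ∬ |x − y − r|^{-α} dμ(x) dμ(y). If ψ_{α,μ}(0) = ∬ |x − y|^{-α} dμ(x) dμ(y) is finite, then ψ_{α,μ}(r) is finite for every r ∈ ℝ, satisfies ψ_{α,μ}(r) ≤ ψ_{α,μ}(0) for every r ∈ ℝ, and r ↦ ψ_{α,μ}(r) is a continuous function on ℝ. -/
open MeasureTheory
open scoped ENNReal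

/-!
The Riesz kernel `‖z‖ ^ (-α)` is a positive mixture of the Gaussians `exp (-s ‖z‖²)`, `s > 0`, and
each Gaussian is a positive multiple of the autocorrelation `∫ h (z + u) h u du` of another
Gaussian `h`. The energy of an autocorrelation at shift `r` is `∫ F u F (u + r) du`, where
`F u = ∫ h (x + u) dμ x`; by Cauchy–Schwarz and translation invariance it is largest at `r = 0`.
Integrating over `s` gives the same bound for the Riesz kernel. Moreover, finite Riesz energy makes
every Gaussian energy finite and continuous in `r`, and these are dominated by their values at
`r = 0`, so continuity passes to the mixture by dominated convergence.
-/

theorem lintegral_mul_comp_add_right_le {G : Type*} [MeasurableSpace G] [AddGroup G]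
    [MeasurableAdd G] (ν : Measure G) [ν.IsAddRightInvariant] {f : G → ℝ≥0∞} (hf : Measurable f)
    (r : G) : ∫⁻ u, f u * f (u + r) ∂ν ≤ ∫⁻ u, f u * f u ∂ν :=
  calc ∫⁻ u, f u * f (u + r) ∂ν
      ≤ (∫⁻ u, f u ^ (2 : ℝ) ∂ν) ^ (1 / 2 : ℝ) * (∫⁻ u, f (u + r) ^ (2 : ℝ) ∂ν) ^ (1 / 2 : ℝ) :=
        ENNReal.lintegral_mul_le_Lp_mul_Lq ν .two_two hf.aemeasurable
          (hf.comp (measurable_add_const r)).aemeasurable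
    _ = ∫⁻ u, f u ^ (2 : ℝ) ∂ν := by
        rw [lintegral_add_right_eq_self (fun u ↦ f u ^ (2 : ℝ)),
          ← ENNReal.rpow_add_of_nonneg _ _ one_half_pos.le one_half_pos.le, add_halves,
          ENNReal.rpow_one]
    _ = ∫⁻ u, f u * f u ∂ν := by simp only [ENNReal.rpow_two, pow_two]

section Group

variable {G : Type*} [MeasurableSpace G] [AddCommGroup G]

/-- The energy `∬ k (x - y - r) dμ(x) dμ(y)` of `μ` against its translate by `r`, for a difference
kernel `k`; as a function of `r` it is the paper's `ψ` when `k = rieszKernel α`. -/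
noncomputable def shiftedEnergy (k : G → ℝ≥0∞) (μ : Measure G) (r : G) : ℝ≥0∞ :=
  ∫⁻ p, k (p.1 - p.2 - r) ∂μ.prod μ

/-- The autocorrelation `z ↦ ∫ h (z + u) h u dν(u)`. Kernels of this form are of positive type,
which is what makes their shifted energy largest at `0`. -/
noncomputable def autocorrelation (ν : Measure G) (h : G → ℝ≥0∞) (z : G) : ℝ≥0∞ :=
  ∫⁻ u, h (z + u) * h u ∂ν

theorem shiftedEnergy_mono {k k' : G → ℝ≥0∞} (hk : ∀ z, k z ≤ k' z) (μ : Measure G) (r : G) :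
    shiftedEnergy k μ r ≤ shiftedEnergy k' μ r :=
  lintegral_mono fun _ ↦ hk _

theorem autocorrelation_sub_sub [MeasurableAdd G] (ν : Measure G) [ν.IsAddRightInvariant]
    (h : G → ℝ≥0∞) (x y r : G) :
    autocorrelation ν h (x - y - r) = ∫⁻ u, h (x + u) * h (y + (u + r)) ∂ν := by
  rw [autocorrelation, ← lintegral_add_right_eq_self _ (y + r)]
  refine lintegral_congr fun u ↦ ?_
  congr 2 <;> abel

theorem shiftedEnergy_autocorrelation [MeasurableAdd₂ G] (ν : Measure G) [SFinite ν]
    [ν.IsAddRightInvariant] {h : G → ℝ≥0∞} (hh : Measurable h) (μ : Measure G) [SFinite μ] (r : G) :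
    shiftedEnergy (autocorrelation ν h) μ r =
      ∫⁻ u, (∫⁻ x, h (x + u) ∂μ) * (∫⁻ y, h (y + (u + r)) ∂μ) ∂ν := by
  simp only [shiftedEnergy, autocorrelation_sub_sub]
  rw [lintegral_lintegral_swap (by fun_prop)]
  refine lintegral_congr fun u ↦ ?_
  exact lintegral_prod_mul (f := fun x ↦ h (x + u)) (g := fun y ↦ h (y + (u + r)))
    (by fun_prop) (by fun_prop)

theorem shiftedEnergy_autocorrelation_le [MeasurableAdd₂ G] (ν : Measure G) [SFinite ν]
    [ν.IsAddRightInvariant] {h : G → ℝ≥0∞} (hh : Measurable h) (μ : Measure G) [SFinite μ] (r : G) :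
    shiftedEnergy (autocorrelation ν h) μ r ≤ shiftedEnergy (autocorrelation ν h) μ 0 := by
  simp only [shiftedEnergy_autocorrelation ν hh μ, add_zero]
  exact lintegral_mul_comp_add_right_le ν (f := fun u ↦ ∫⁻ x, h (x + u) ∂μ) (by fun_prop) r

variable [MeasurableSub₂ G]

theorem shiftedEnergy_eq_lintegral_lintegral {k : G → ℝ≥0∞} (hk : Measurable k) (μ : Measure G)
    [SFinite μ] (r : G) : shiftedEnergy k μ r = ∫⁻ x, ∫⁻ y, k (x - y - r) ∂μ ∂μ :=
  lintegral_prod _ (by fun_prop)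

theorem shiftedEnergy_const_mul (c : ℝ≥0∞) {k : G → ℝ≥0∞} (hk : Measurable k) (μ : Measure G)
    (r : G) : shiftedEnergy (fun z ↦ c * k z) μ r = c * shiftedEnergy k μ r :=
  lintegral_const_mul c (by fun_prop)

theorem shiftedEnergy_lintegral {T : Type*} [MeasurableSpace T] (ρ : Measure T) [SFinite ρ]
    {K : T → G → ℝ≥0∞} (hK : Measurable (Function.uncurry K)) (μ : Measure G) [SFinite μ] (r : G) :
    shiftedEnergy (fun z ↦ ∫⁻ t, K t z ∂ρ) μ r = ∫⁻ t, shiftedEnergy (K t) μ r ∂ρ :=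
  lintegral_lintegral_swap (f := fun (p : G × G) t ↦ K t (p.1 - p.2 - r))
    (hK.comp (by fun_prop : Measurable fun q : (G × G) × T ↦
      (q.2, q.1.1 - q.1.2 - r))).aemeasurable

theorem measurable_shiftedEnergy {T : Type*} [MeasurableSpace T] {K : T → G → ℝ≥0∞}
    (hK : Measurable (Function.uncurry K)) (μ : Measure G) [SFinite μ] (r : G) :
    Measurable fun t ↦ shiftedEnergy (K t) μ r :=
  Measurable.lintegral_prod_right (hK.comp
    (by fun_prop : Measurable fun q : T × G × G ↦ (q.1, q.2.1 - q.2.2 - r)))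

end Group

theorem lintegral_rpow_mul_exp_neg_mul_Ioi {a : ℝ} (ha : 0 < a) {t : ℝ} (ht : 0 ≤ t) :
    ∫⁻ s in Set.Ioi 0, ENNReal.ofReal (s ^ (a - 1) * Real.exp (-(t * s))) =
      ENNReal.ofReal (Real.Gamma a) * ENNReal.ofReal t ^ (-a) := by
  have hΓ := Real.Gamma_pos_of_pos ha
  have integrand_nonneg : 0 ≤ᵐ[volume.restrict (Set.Ioi 0)]
      fun s : ℝ ↦ s ^ (a - 1) * Real.exp (-(t * s)) := by
    filter_upwards [ae_restrict_mem measurableSet_Ioi] with s hs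
    exact mul_nonneg (Real.rpow_nonneg (le_of_lt hs) _) (Real.exp_pos _).le
  rcases ht.eq_or_lt with rfl | ht
  · rw [ENNReal.ofReal_zero, ENNReal.zero_rpow_of_neg (neg_lt_zero.2 ha),
      ENNReal.mul_top (by simpa using hΓ)]
    by_contra h
    rw [← ne_eq, lintegral_ofReal_ne_top_iff_integrable (by fun_prop) integrand_nonneg] at h
    exact not_integrableOn_Ioi_rpow (a - 1) (by simpa [IntegrableOn] using h)
  · have hI := Real.integral_rpow_mul_exp_neg_mul_Ioi ha ht
    rw [← ofReal_integral_eq_lintegral_ofReal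
      (.of_integral_ne_zero (hI.trans_ne (by positivity))) integrand_nonneg, hI,
      ENNReal.ofReal_mul (by positivity), mul_comm, ← ENNReal.ofReal_rpow_of_pos (by positivity),
      one_div, ENNReal.ofReal_inv_of_pos ht, ENNReal.inv_rpow, ENNReal.rpow_neg]

theorem ofReal_exp_neg_le {a : ℝ} (ha : 0 < a) (x : ℝ) :
    ENNReal.ofReal (Real.exp (-x)) ≤ ENNReal.ofReal a ^ a * ENNReal.ofReal x ^ (-a) := by
  rw [ENNReal.rpow_neg, ← div_eq_mul_inv, ENNReal.le_div_iff_mul_le (by simp [ha]) (by simp [ha])]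
  have mul_exp_le : Real.exp (-(x / a)) * x ≤ a := by
    have : x / a ≤ Real.exp (x / a) := by linarith [Real.add_one_le_exp (x / a)]
    rw [Real.exp_neg, inv_mul_le_iff₀ (Real.exp_pos _)]
    exact (div_le_iff₀ ha).1 this
  calc ENNReal.ofReal (Real.exp (-x)) * ENNReal.ofReal x ^ a
      = ENNReal.ofReal (Real.exp (-(x / a)) * x) ^ a := by
        rw [ENNReal.ofReal_mul (Real.exp_pos _).le, ENNReal.mul_rpow_of_nonneg _ _ ha.le,
          ENNReal.ofReal_rpow_of_pos (Real.exp_pos _), ← Real.exp_mul]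
        congr 3
        field_simp
    _ ≤ ENNReal.ofReal a ^ a := by gcongr

section Kernels

variable {E : Type*} [NormedAddCommGroup E]

/-- The Gaussian `exp (-s ‖z‖²)`, unnormalised; `s` is an inverse variance, not a width. -/
noncomputable def gaussianKernel (s : ℝ) (z : E) : ℝ≥0∞ :=
  ENNReal.ofReal (Real.exp (-(s * ‖z‖ ^ 2)))

/-- The Riesz kernel `‖z‖ ^ (-α)`, equal to `∞` at `z = 0` when `0 < α`. -/
noncomputable def rieszKernel (α : ℝ) (z : E) : ℝ≥0∞ :=
  ‖z‖ₑ ^ (-α)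

/-- The density in `s` that expresses the Riesz kernel of exponent `α` as a mixture of the Gaussians
`exp (-s ‖z‖²)`; only its values at `s > 0` matter. -/
noncomputable def subordinationDensity (α s : ℝ) : ℝ≥0∞ :=
  (ENNReal.ofReal (Real.Gamma (α / 2)))⁻¹ * ENNReal.ofReal (s ^ (α / 2 - 1))

theorem continuous_gaussianKernel (s : ℝ) : Continuous (gaussianKernel s : E → ℝ≥0∞) :=
  ENNReal.continuous_ofReal.comp (by fun_prop)

theorem measurable_uncurry_gaussianKernel [MeasurableSpace E] [OpensMeasurableSpace E] :
    Measurable (Function.uncurry (gaussianKernel : ℝ → E → ℝ≥0∞)) := by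
  unfold gaussianKernel Function.uncurry
  fun_prop

theorem measurable_rieszKernel [MeasurableSpace E] [OpensMeasurableSpace E] (α : ℝ) :
    Measurable (rieszKernel α : E → ℝ≥0∞) := by
  unfold rieszKernel
  fun_prop

theorem measurable_subordinationDensity (α : ℝ) : Measurable (subordinationDensity α) := by
  unfold subordinationDensity
  fun_prop

theorem subordinationDensity_ne_top {α : ℝ} (hα : 0 < α) (s : ℝ) :
    subordinationDensity α s ≠ ∞ :=
  ENNReal.mul_ne_top (by simpa using Real.Gamma_pos_of_pos (half_pos hα)) ENNReal.ofReal_ne_top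

theorem gaussianKernel_sub_le {s : ℝ} (hs : 0 ≤ s) (z r : E) :
    gaussianKernel s (z - r) ≤
      ENNReal.ofReal (Real.exp (s * ‖r‖ ^ 2)) * gaussianKernel (s / 2) z := by
  have norm_sq_le : ‖z‖ ^ 2 ≤ 2 * ‖z - r‖ ^ 2 + 2 * ‖r‖ ^ 2 := by
    have : ‖z‖ ≤ ‖z - r‖ + ‖r‖ := by simpa using norm_add_le (z - r) r
    nlinarith [norm_nonneg z, sq_nonneg (‖z - r‖ - ‖r‖)]
  rw [gaussianKernel, gaussianKernel, ← ENNReal.ofReal_mul (Real.exp_pos _).le, ← Real.exp_add]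
  gcongr
  nlinarith

theorem ofReal_norm_sq_rpow_neg_half (α : ℝ) (z : E) :
    ENNReal.ofReal (‖z‖ ^ 2) ^ (-(α / 2)) = rieszKernel α z := by
  rw [rieszKernel, ENNReal.ofReal_pow (norm_nonneg z), ofReal_norm, ← ENNReal.rpow_natCast,
    ← ENNReal.rpow_mul]
  congr 1
  push_cast
  ring

theorem gaussianKernel_le_rieszKernel {s α : ℝ} (hs : 0 < s) (hα : 0 < α) (z : E) :
    gaussianKernel s z ≤
      ENNReal.ofReal (α / 2) ^ (α / 2) * ENNReal.ofReal s ^ (-(α / 2)) * rieszKernel α z := by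
  rw [mul_assoc, ← ofReal_norm_sq_rpow_neg_half, ← ENNReal.mul_rpow_of_ne_top
    ENNReal.ofReal_ne_top ENNReal.ofReal_ne_top, ← ENNReal.ofReal_mul hs.le]
  exact ofReal_exp_neg_le (half_pos hα) _

theorem rieszKernel_eq_lintegral_gaussianKernel {α : ℝ} (hα : 0 < α) (z : E) :
    rieszKernel α z = ∫⁻ s in Set.Ioi 0, subordinationDensity α s * gaussianKernel s z := by
  have hΓ : 0 < Real.Gamma (α / 2) := Real.Gamma_pos_of_pos (half_pos hα)
  have gamma_integral := lintegral_rpow_mul_exp_neg_mul_Ioi (half_pos hα) (sq_nonneg ‖z‖)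
  rw [ofReal_norm_sq_rpow_neg_half] at gamma_integral
  rw [← ENNReal.inv_mul_cancel_left (b := rieszKernel α z) (by simpa using hΓ)
    (ENNReal.ofReal_ne_top (r := Real.Gamma (α / 2))), ← gamma_integral,
    ← lintegral_const_mul' _ _ (by simpa using hΓ)]
  refine setLIntegral_congr_fun measurableSet_Ioi fun s hs ↦ ?_
  simp only [subordinationDensity, gaussianKernel, mul_assoc, mul_comm s,
    ENNReal.ofReal_mul (Real.rpow_nonneg (le_of_lt hs) (α / 2 - 1))]

variable [MeasurableSpace E] [BorelSpace E] [SecondCountableTopology E] (μ : Measure E)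

theorem shiftedEnergy_gaussianKernel_ne_top {s α : ℝ} (hs : 0 < s) (hα : 0 < α) {r : E}
    (hfin : shiftedEnergy (rieszKernel α) μ r ≠ ∞) :
    shiftedEnergy (gaussianKernel s) μ r ≠ ∞ := by
  refine ne_top_of_le_ne_top ?_ (shiftedEnergy_mono (gaussianKernel_le_rieszKernel hs hα) μ r)
  rw [shiftedEnergy_const_mul _ (measurable_rieszKernel α)]
  exact ENNReal.mul_ne_top (ENNReal.mul_ne_top
    (ENNReal.rpow_ne_top_of_nonneg (half_pos hα).le ENNReal.ofReal_ne_top) (by simp [hs])) hfin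

theorem continuous_shiftedEnergy_gaussianKernel {s : ℝ} (hs : 0 ≤ s)
    (hfin : shiftedEnergy (gaussianKernel (s / 2)) μ 0 ≠ ∞) :
    Continuous (shiftedEnergy (gaussianKernel s) μ) := by
  refine continuous_iff_continuousAt.2 fun r₀ ↦
    tendsto_lintegral_filter_of_dominated_convergence
      (fun p ↦ ENNReal.ofReal (Real.exp (s * (‖r₀‖ + 1) ^ 2)) *
        gaussianKernel (s / 2) (p.1 - p.2 - 0)) (.of_forall fun r ↦ ?_) ?_ ?_ ?_
  · exact (continuous_gaussianKernel s).measurable.comp (by fun_prop)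
  · filter_upwards [continuous_norm.continuousAt.eventually_le_const (lt_add_one ‖r₀‖)] with r hr
    refine .of_forall fun p ↦ (gaussianKernel_sub_le hs (p.1 - p.2) r).trans ?_
    rw [sub_zero]
    gcongr
  · rw [lintegral_const_mul' _ _ ENNReal.ofReal_ne_top]
    exact ENNReal.mul_ne_top ENNReal.ofReal_ne_top hfin
  · exact .of_forall fun p ↦ ((continuous_gaussianKernel s).comp (by fun_prop)).tendsto r₀

theorem shiftedEnergy_rieszKernel [SFinite μ] {α : ℝ} (hα : 0 < α) (r : E) :
    shiftedEnergy (rieszKernel α) μ r =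
      ∫⁻ s in Set.Ioi 0, subordinationDensity α s * shiftedEnergy (gaussianKernel s) μ r := by
  simp only [← shiftedEnergy_const_mul _ (continuous_gaussianKernel _).measurable]
  rw [funext (rieszKernel_eq_lintegral_gaussianKernel hα), shiftedEnergy_lintegral]
  exact ((measurable_subordinationDensity α).comp measurable_fst).mul
    measurable_uncurry_gaussianKernel

end Kernels

section Euclidean

variable {E : Type*} [NormedAddCommGroup E] [InnerProductSpace ℝ E] [FiniteDimensional ℝ E]
  [MeasurableSpace E] [BorelSpace E]

theorem lintegral_gaussianKernel {s : ℝ} (hs : 0 < s) :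
    ∫⁻ z : E, gaussianKernel s z =
      ENNReal.ofReal ((Real.pi / s) ^ (Module.finrank ℝ E / 2 : ℝ)) := by
  have hI := GaussianFourier.integral_rexp_neg_mul_sq_norm (V := E) hs
  simp only [neg_mul] at hI
  rw [← hI, ofReal_integral_eq_lintegral_ofReal
    (.of_integral_ne_zero (hI.trans_ne (by positivity))) (.of_forall fun _ ↦ (Real.exp_pos _).le)]
  rfl

theorem autocorrelation_gaussianKernel (s : ℝ) (z : E) :
    autocorrelation volume (gaussianKernel (2 * s)) z =
      (∫⁻ u : E, gaussianKernel (4 * s) u) * gaussianKernel s z := by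
  rw [autocorrelation, ← lintegral_sub_right_eq_self _ ((2 : ℝ)⁻¹ • z),
    ← lintegral_mul_const _ (continuous_gaussianKernel _).measurable]
  refine lintegral_congr fun u ↦ ?_
  have parallelogram : ‖z + (u - (2 : ℝ)⁻¹ • z)‖ ^ 2 + ‖u - (2 : ℝ)⁻¹ • z‖ ^ 2 =
      2 * ‖u‖ ^ 2 + ‖z‖ ^ 2 / 2 := by
    rw [show z + (u - (2 : ℝ)⁻¹ • z) = u + (2 : ℝ)⁻¹ • z by module,
      parallelogram_law_with_norm ℝ, norm_smul, norm_inv, Real.norm_ofNat]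
    ring
  simp only [gaussianKernel, ← ENNReal.ofReal_mul (Real.exp_pos _).le, ← Real.exp_add]
  congr 2
  linear_combination -2 * s * parallelogram

variable (μ : Measure E) [SFinite μ]

theorem shiftedEnergy_gaussianKernel_le {s : ℝ} (hs : 0 < s) (r : E) :
    shiftedEnergy (gaussianKernel s) μ r ≤ shiftedEnergy (gaussianKernel s) μ 0 := by
  have mass : ∫⁻ u : E, gaussianKernel (4 * s) u ≠ 0 ∧ ∫⁻ u : E, gaussianKernel (4 * s) u ≠ ∞ := by
    rw [lintegral_gaussianKernel (by positivity)]
    exact ⟨(ENNReal.ofReal_pos.2 (by positivity)).ne', ENNReal.ofReal_ne_top⟩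
  have autocorrelation_le := shiftedEnergy_autocorrelation_le volume
    (continuous_gaussianKernel (2 * s)).measurable μ r
  simp only [funext (autocorrelation_gaussianKernel (E := E) s),
    shiftedEnergy_const_mul _ (continuous_gaussianKernel s).measurable]
    at autocorrelation_le
  exact (ENNReal.mul_le_mul_iff_right mass.1 mass.2).1 autocorrelation_le

theorem shiftedEnergy_rieszKernel_le {α : ℝ} (hα : 0 < α) (r : E) :
    shiftedEnergy (rieszKernel α) μ r ≤ shiftedEnergy (rieszKernel α) μ 0 := by
  simp only [shiftedEnergy_rieszKernel μ hα]
  refine setLIntegral_mono' measurableSet_Ioi fun s hs ↦ ?_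
  gcongr
  exact shiftedEnergy_gaussianKernel_le μ hs r

theorem continuous_shiftedEnergy_rieszKernel {α : ℝ} (hα : 0 < α)
    (hfin : shiftedEnergy (rieszKernel α) μ (0 : E) ≠ ∞) :
    Continuous (shiftedEnergy (rieszKernel α) μ) := by
  rw [funext (shiftedEnergy_rieszKernel μ hα)]
  refine continuous_iff_continuousAt.2 fun r₀ ↦
    tendsto_lintegral_filter_of_dominated_convergence
      (fun s ↦ subordinationDensity α s * shiftedEnergy (gaussianKernel s) μ 0)
      (.of_forall fun r ↦ ?_) (.of_forall fun r ↦ ?_) ?_ ?_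
  · exact (measurable_subordinationDensity α).mul
      (measurable_shiftedEnergy measurable_uncurry_gaussianKernel μ r)
  · filter_upwards [ae_restrict_mem measurableSet_Ioi] with s hs
    gcongr
    exact shiftedEnergy_gaussianKernel_le μ hs r
  · rwa [← shiftedEnergy_rieszKernel μ hα]
  · filter_upwards [ae_restrict_mem measurableSet_Ioi] with s hs
    have gaussian_continuous := continuous_shiftedEnergy_gaussianKernel μ (le_of_lt hs)
      (shiftedEnergy_gaussianKernel_ne_top μ (half_pos hs) hα hfin)
    exact ENNReal.Tendsto.const_mul (gaussian_continuous.tendsto r₀)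
      (.inr (subordinationDensity_ne_top hα s))

theorem psi_finite_le_continuous_general {α : ℝ} (hα : 0 < α)
    (hfin : shiftedEnergy (rieszKernel α) μ (0 : E) ≠ ∞) :
    (∀ r : E, shiftedEnergy (rieszKernel α) μ r ≠ ∞) ∧
      (∀ r : E, shiftedEnergy (rieszKernel α) μ r ≤ shiftedEnergy (rieszKernel α) μ 0) ∧
      Continuous fun r : E ↦ (shiftedEnergy (rieszKernel α) μ r).toReal := by
  have le := shiftedEnergy_rieszKernel_le μ hα
  have ne_top := fun r ↦ ne_top_of_le_ne_top hfin (le r)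
  exact ⟨ne_top, le, ENNReal.continuousOn_toReal.comp_continuous
    (continuous_shiftedEnergy_rieszKernel μ hα hfin) ne_top⟩

end Euclidean

/-- Lemma: for a Borel probability measure `μ` on `ℝ` and `0 < α < 1`, if
`ψ_{α,μ}(0) = ∬ |x − y|^{-α} dμ dμ` is finite, then
`ψ_{α,μ}(r) = ∬ |x − y − r|^{-α} dμ dμ` is finite for every `r`, is bounded by
`ψ_{α,μ}(0)`, and is a continuous function of `r`. -/
theorem psi_finite_le_continuous (μ : Measure ℝ) [IsProbabilityMeasure μ]
    (α : ℝ) (hα0 : 0 < α) (hα1 : α < 1)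
    (ψ : ℝ → ℝ≥0∞)
    (hψ : ∀ r : ℝ, ψ r = ∫⁻ x, ∫⁻ y, (ENNReal.ofReal |x - y - r|) ^ (-α) ∂μ ∂μ)
    (hfin : ψ 0 ≠ ⊤) :
    (∀ r : ℝ, ψ r ≠ ⊤) ∧ (∀ r : ℝ, ψ r ≤ ψ 0) ∧
      Continuous fun r : ℝ => (ψ r).toReal := by
  obtain rfl : ψ = shiftedEnergy (rieszKernel α) μ := funext fun r ↦ by
    simp only [hψ, shiftedEnergy_eq_lintegral_lintegral (measurable_rieszKernel α), rieszKernel,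
      Real.enorm_eq_ofReal_abs]
  exact psi_finite_le_continuous_general μ hα0 hfin
end

section
/- Let S(λ, c̄, p̄) be an iterated function scheme of similarities f_j(x) = λx + c_j (0 < λ < 1) with probability vector p̄, let μ be its stationary measure (so μ is a compactly supported Borel probability measure with μ = ∑_j p_j (f_j)_*μ), and suppose 0 < α < 1 is such that I(μ, α) = ∬ |x − y|^{-α} dμ(x) dμ(y) is finite. Then the function ψ_{α,μ}(r) := ∬ |x − y − r|^{-α} dμ(x) dμ(y) is a fixed point of the symmetric diffusion operator: for every r ∈ ℝ, ψ_{α,μ}(r) = λ^{-α} ∑_{i,j} p_i p_j ψ_{α,μ}((r − c_i + c_j)/λ). -/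
open MeasureTheory
open scoped ENNReal

/-!
Stationarity, applied in each variable, replaces the pair `(x, y)` in the double integral by the
`p i * p j`-weighted average of the pairs `(l x + c i, l y + c j)`. The difference of such a pair
satisfies `(l x + c i) - (l y + c j) - r = l (x - y - (r - c i + c j) / l)`, so homogeneity of the
Riesz kernel pulls out the factor `|l| ^ (-α)`.
-/

section Stationary

variable {ι X : Type*} [Fintype ι] [MeasurableSpace X]

/-- The measure `μ` is stationary for the maps `f j` with weights `p j`:
`μ = ∑ j, p j • (f j)_* μ`. The weights are not required to sum to one. -/
def IsStationaryMeasure (p : ι → ℝ≥0∞) (f : ι → X → X) (μ : Measure X) : Prop :=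
  μ = ∑ j, p j • μ.map (f j)

namespace IsStationaryMeasure

variable {p : ι → ℝ≥0∞} {f : ι → X → X} {μ : Measure X}

theorem lintegral_eq_sum (hμ : IsStationaryMeasure p f μ) (hf : ∀ j, Measurable (f j))
    {g : X → ℝ≥0∞} (hg : Measurable g) :
    ∫⁻ x, g x ∂μ = ∑ j, p j * ∫⁻ x, g (f j x) ∂μ := by
  calc
    ∫⁻ x, g x ∂μ = ∫⁻ x, g x ∂(∑ j, p j • μ.map (f j)) := congrArg (lintegral · g) hμ
    _ = ∑ j, p j * ∫⁻ x, g (f j x) ∂μ := by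
      simp only [lintegral_finsetSum_measure, lintegral_smul_measure, smul_eq_mul,
        lintegral_map hg (hf _)]

theorem lintegral_lintegral_eq_sum [SFinite μ] (hμ : IsStationaryMeasure p f μ)
    (hf : ∀ j, Measurable (f j)) {g : X → X → ℝ≥0∞} (hg : Measurable (Function.uncurry g)) :
    ∫⁻ x, ∫⁻ y, g x y ∂μ ∂μ =
      ∑ i, ∑ j, p i * p j * ∫⁻ x, ∫⁻ y, g (f i x) (f j y) ∂μ ∂μ := by
  have inner_measurable (i j : ι) : Measurable fun x ↦ ∫⁻ y, g (f i x) (f j y) ∂μ :=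
    (hg.comp ((hf i).prodMap (hf j))).lintegral_prod_right'
  calc
    ∫⁻ x, ∫⁻ y, g x y ∂μ ∂μ = ∑ i, p i * ∫⁻ x, ∫⁻ y, g (f i x) y ∂μ ∂μ :=
      hμ.lintegral_eq_sum hf hg.lintegral_prod_right'
    _ = ∑ i, p i * ∫⁻ x, ∑ j, p j * ∫⁻ y, g (f i x) (f j y) ∂μ ∂μ := by
      simp only [hμ.lintegral_eq_sum hf hg.of_uncurry_left]
    _ = ∑ i, ∑ j, p i * p j * ∫⁻ x, ∫⁻ y, g (f i x) (f j y) ∂μ ∂μ := by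
      simp only [lintegral_finsetSum _ fun j _ ↦ (inner_measurable _ j).const_mul (p j),
        lintegral_const_mul _ (inner_measurable _ _), Finset.mul_sum, mul_assoc]

end IsStationaryMeasure

end Stationary

section Similarity

variable {𝕜 E : Type*}

theorem smul_add_sub_smul_add_sub [DivisionRing 𝕜] [AddCommGroup E] [Module 𝕜 E]
    {l : 𝕜} (hl : l ≠ 0) (a b r x y : E) :
    l • x + a - (l • y + b) - r = l • (x - y - l⁻¹ • (r - a + b)) := by
  rw [smul_sub, smul_sub, smul_inv_smul₀ hl]
  abel

theorem enorm_smul_rpow [SeminormedRing 𝕜] [SeminormedAddGroup E] [SMul 𝕜 E] [NormSMulClass 𝕜 E]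
    (α : ℝ) (l : 𝕜) (x : E) : ‖l • x‖ₑ ^ α = ‖l‖ₑ ^ α * ‖x‖ₑ ^ α := by
  rw [enorm_smul, ENNReal.mul_rpow_of_ne_top enorm_ne_top enorm_ne_top]

end Similarity

section Diffusion

variable {ι 𝕜 E : Type*} [Fintype ι] [NormedField 𝕜] [SeminormedAddCommGroup E]
  [NormedSpace 𝕜 E]

/-- The function `ψ_{α,μ}(r) = ∬ ‖x - y - r‖ ^ (-α) dμ(x) dμ(y)`: the Riesz `α`-potential at `r` of
the distribution of the difference of two independent `μ`-distributed points. It takes values in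
`[0, ∞]`, so that it is defined for every measure; its value at `0` is the `α`-energy of `μ`. -/
noncomputable def differencePotential [MeasurableSpace E] (α : ℝ) (μ : Measure E) (r : E) : ℝ≥0∞ :=
  ∫⁻ x, ∫⁻ y, ‖x - y - r‖ₑ ^ (-α) ∂μ ∂μ

/-- The symmetric diffusion operator `D^{(2)}_{α,S}` of the scheme of similarities
`x ↦ l • x + c j` with weights `p j`, acting on `[0, ∞]`-valued functions. -/
noncomputable def symmetricDiffusion (α : ℝ) (l : 𝕜) (c : ι → E) (p : ι → ℝ≥0∞) (ψ : E → ℝ≥0∞)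
    (r : E) : ℝ≥0∞ :=
  ‖l‖ₑ ^ (-α) * ∑ i, ∑ j, p i * p j * ψ (l⁻¹ • (r - c i + c j))

variable [MeasurableSpace E] [BorelSpace E] [SecondCountableTopology E]

theorem measurable_enorm_sub_sub_rpow (α : ℝ) (r : E) :
    Measurable (Function.uncurry fun x y : E ↦ ‖x - y - r‖ₑ ^ α) := by
  unfold Function.uncurry
  fun_prop

theorem lintegral_lintegral_enorm_smul_add_rpow (α : ℝ) {l : 𝕜} (hl : l ≠ 0) (μ : Measure E)
    [SFinite μ] (a b r : E) :
    ∫⁻ x, ∫⁻ y, ‖l • x + a - (l • y + b) - r‖ₑ ^ (-α) ∂μ ∂μ =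
      ‖l‖ₑ ^ (-α) * differencePotential α μ (l⁻¹ • (r - a + b)) := by
  have kernel_measurable := measurable_enorm_sub_sub_rpow (-α) (l⁻¹ • (r - a + b))
  simp only [smul_add_sub_smul_add_sub hl, enorm_smul_rpow, differencePotential,
    lintegral_const_mul _ kernel_measurable.of_uncurry_left,
    lintegral_const_mul _ kernel_measurable.lintegral_prod_right]

theorem psi_fixed_point_general (α : ℝ) {l : 𝕜} (hl : l ≠ 0) {c : ι → E} {p : ι → ℝ≥0∞}
    {μ : Measure E} [SFinite μ] (hμ : IsStationaryMeasure p (fun j x ↦ l • x + c j) μ) :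
    Function.IsFixedPt (symmetricDiffusion α l c p) (differencePotential α μ) := by
  have similarity_measurable (j : ι) : Measurable fun x : E ↦ l • x + c j :=
    ((continuous_const_smul l).add continuous_const).measurable
  funext r
  calc
    symmetricDiffusion α l c p (differencePotential α μ) r
        = ∑ i, ∑ j, p i * p j *
            ∫⁻ x, ∫⁻ y, ‖l • x + c i - (l • y + c j) - r‖ₑ ^ (-α) ∂μ ∂μ := by
      simp only [lintegral_lintegral_enorm_smul_add_rpow α hl, symmetricDiffusion, Finset.mul_sum,
        mul_left_comm]
    _ = differencePotential α μ r :=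
      (hμ.lintegral_lintegral_eq_sum similarity_measurable
        (measurable_enorm_sub_sub_rpow (-α) r)).symm

end Diffusion

/-- Corollary: if `μ` is the stationary measure of an iterated function scheme of
similarities `f_j(x) = λx + c_j` with probability vector `p̄`, compactly supported, and
its energy `I(μ, α)` is finite for some `0 < α < 1`, then
`ψ_{α,μ}(r) = ∬ |x − y − r|^{-α} dμ dμ` is a fixed point of the symmetric diffusion
operator: `ψ_{α,μ}(r) = λ^{-α} ∑_{i,j} p_i p_j ψ_{α,μ}((r − c_i + c_j)/λ)`. -/
theorem psi_fixed_point (k : ℕ) (l : ℝ) (hl0 : 0 < l) (hl1 : l < 1)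
    (c : Fin k → ℝ) (p : Fin k → ℝ) (hp : ∀ j, 0 ≤ p j) (hpsum : ∑ j, p j = 1)
    (μ : Measure ℝ) [IsProbabilityMeasure μ]
    (hμ : μ = ∑ j, ENNReal.ofReal (p j) • Measure.map (fun x : ℝ => l * x + c j) μ)
    (a b : ℝ) (hsupp : μ (Set.Icc a b)ᶜ = 0)
    (α : ℝ) (hα0 : 0 < α) (hα1 : α < 1)
    (hfin : (∫⁻ x, ∫⁻ y, (ENNReal.ofReal |x - y|) ^ (-α) ∂μ ∂μ) ≠ ⊤) :
    ∀ r : ℝ,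
      (∫⁻ x, ∫⁻ y, (ENNReal.ofReal |x - y - r|) ^ (-α) ∂μ ∂μ) =
      ENNReal.ofReal (l ^ (-α)) *
        ∑ i, ∑ j, ENNReal.ofReal (p i * p j) *
          ∫⁻ x, ∫⁻ y,
            (ENNReal.ofReal |x - y - (r - c i + c j) / l|) ^ (-α) ∂μ ∂μ := by
  intro r
  simpa only [differencePotential, symmetricDiffusion, Real.enorm_eq_ofReal_abs, abs_of_pos hl0,
    ENNReal.ofReal_rpow_of_pos hl0, ENNReal.ofReal_mul (hp _), smul_eq_mul, inv_mul_eq_div]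
    using (congrFun (psi_fixed_point_general α hl0.ne' hμ) r).symm
end

section
/- Let X be a set and let A be a monotone operator on functions X → ℝ, i.e., if g(x) ≤ f(x) for all x ∈ X then (Ag)(x) ≤ (Af)(x) for all x ∈ X. Let ϑ > 0 and define Â f := x ↦ min((Af)(x) + ϑ, f(x)). Suppose f : X → ℝ and x₀ ∈ X satisfy (Â f)(x₀) = (Af)(x₀) + ϑ. Then for every k ≥ 1, (A(Â^k f))(x₀) + ϑ ≤ (Â^k f)(x₀), where Â^k denotes the k-fold iterate of Â. -/
section

variable {ι : Type*} {α : ι → Type*} [∀ i, SemilatticeInf (α i)]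
  {B : (∀ i, α i) → ∀ i, α i} {f : ∀ i, α i} {i : ι}

theorem map_inf_apply_le_of_map_apply_le (hB : Monotone B) (h : B f i ≤ f i) :
    B (B f ⊓ f) i ≤ (B f ⊓ f) i :=
  calc
    B (B f ⊓ f) i ≤ B f i := hB inf_le_right i
    _ = (B f ⊓ f) i := (inf_eq_left.2 h).symm

-- The truncated operator `Â` of `A` and `ϑ` is `B ⊓ id` for the monotone `B g = A g + ϑ`.
theorem min_operator_iterate_general (hB : Monotone B) (h : B f i ≤ f i) (k : ℕ) :
    B ((B ⊓ id)^[k] f) i ≤ (B ⊓ id)^[k] f i :=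
  have hmaps : Set.MapsTo (B ⊓ id) {g | B g i ≤ g i} {g | B g i ≤ g i} :=
    fun _ hg => map_inf_apply_le_of_map_apply_le hB hg
  hmaps.iterate k h

end

/-- Lemma: let `A` be a monotone operator on real-valued functions on `X`, `ϑ > 0`, and
`Â f := x ↦ min((Af)(x) + ϑ, f(x))`.  If `(Â f)(x₀) = (A f)(x₀) + ϑ` for some `f` and
`x₀`, then for every `k ≥ 1` we have `(A(Â^k f))(x₀) + ϑ ≤ (Â^k f)(x₀)`. -/
theorem min_operator_iterate {X : Type*} (A : (X → ℝ) → X → ℝ)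
    (hmono : ∀ f g : X → ℝ, (∀ x, g x ≤ f x) → ∀ x, A g x ≤ A f x)
    (ϑ : ℝ) (hϑ : 0 < ϑ) (f : X → ℝ) (x₀ : X)
    (h : min (A f x₀ + ϑ) (f x₀) = A f x₀ + ϑ) :
    ∀ k : ℕ, 1 ≤ k →
      A ((fun g : X → ℝ => fun x => min (A g x + ϑ) (g x))^[k] f) x₀ + ϑ ≤
        (fun g : X → ℝ => fun x => min (A g x + ϑ) (g x))^[k] f x₀ :=
  fun k _ => min_operator_iterate_general (B := fun g x => A g x + ϑ)
    (fun _ _ hgf x => add_le_add_left (hmono _ _ hgf x) ϑ) (min_eq_left_iff.1 h) k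
end

section
/- Let X be a set and let A be a monotone operator on functions X → ℝ, i.e., if g(x) ≤ f(x) for all x ∈ X then (Ag)(x) ≤ (Af)(x) for all x ∈ X. Let ϑ > 0 and define Â f := x ↦ min((Af)(x) + ϑ, f(x)). Suppose that for some n > 0 and f : X → ℝ one has (Â^n f)(x) < f(x) for every x ∈ X. Then (A(Â^n f))(x) ≤ (Â^n f)(x) for every x ∈ X. -/
/-!
Fix a point `x`. Truncation changes `g` at `x` only where `B g` lies below `g`, replacing the value
by `B g x`; since truncation never raises `g`, monotonicity keeps `B` of the truncated function
below that value. So the subinvariance inequality holds at `x` from the first iterate that differs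
from `f` there.
-/

/-- The truncation `f ↦ min(Bf, f)` of an operator `B`, which cuts `f` down to `Bf` wherever `f` is
larger. The operator `Â` with parameter `ϑ` is the truncation of `f ↦ Af + ϑ`. -/
def truncation {L : Type*} [SemilatticeInf L] (B : L → L) (f : L) : L :=
  B f ⊓ f

namespace truncation

variable {X α : Type*}

lemma le_self {L : Type*} [SemilatticeInf L] (B : L → L) (f : L) : truncation B f ≤ f :=
  inf_le_right

lemma apply_le_of_ne [LinearOrder α] {B : (X → α) → X → α} {g : X → α} {x : X}
    (hne : truncation B g x ≠ g x) : B g x ≤ g x :=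
  (le_total (B g x) (g x)).resolve_right fun hle => hne (inf_eq_right.mpr hle)

lemma subinvariant_at [SemilatticeInf α] {B : (X → α) → X → α} (hB : Monotone B) {g : X → α}
    {x : X} (hg : B g x ≤ g x) : B (truncation B g) x ≤ truncation B g x :=
  calc B (truncation B g) x ≤ B g x := hB (le_self B g) x
    _ = truncation B g x := (inf_eq_left.mpr hg).symm

end truncation

theorem min_operator_subinvariant_general {X α : Type*} [LinearOrder α] {B : (X → α) → X → α}
    (hB : Monotone B) (n : ℕ) {f : X → α} {x : X} (hne : (truncation B)^[n] f x ≠ f x) :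
    B ((truncation B)^[n] f) x ≤ (truncation B)^[n] f x := by
  induction n with
  | zero => exact absurd rfl hne
  | succ n ih =>
    rw [Function.iterate_succ_apply'] at hne ⊢
    refine truncation.subinvariant_at hB ?_
    by_cases hfix : (truncation B)^[n] f x = f x
    · exact truncation.apply_le_of_ne (hfix ▸ hne)
    · exact ih hfix

/-- Proposition: let `A` be a monotone operator on real-valued functions on `X`, `ϑ > 0`,
and `Â f := x ↦ min((Af)(x) + ϑ, f(x))`.  If for some `n > 0` and `f` we have
`(Â^n f)(x) < f(x)` for every `x ∈ X`, then `A(Â^n f) ≤ Â^n f` pointwise on `X`. -/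
theorem min_operator_subinvariant {X : Type*} (A : (X → ℝ) → X → ℝ)
    (hmono : ∀ f g : X → ℝ, (∀ x, g x ≤ f x) → ∀ x, A g x ≤ A f x)
    (ϑ : ℝ) (hϑ : 0 < ϑ) (n : ℕ) (hn : 0 < n) (f : X → ℝ)
    (h : ∀ x, (fun g : X → ℝ => fun x => min (A g x + ϑ) (g x))^[n] f x < f x) :
    ∀ x, A ((fun g : X → ℝ => fun x => min (A g x + ϑ) (g x))^[n] f) x ≤
      (fun g : X → ℝ => fun x => min (A g x + ϑ) (g x))^[n] f x := by
  have hB : Monotone fun (g : X → ℝ) x => A g x + ϑ := fun g f hgf x =>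
    add_le_add_left (hmono f g hgf x) ϑ
  exact fun x => (le_add_of_nonneg_right hϑ.le).trans
    (min_operator_subinvariant_general hB n (h x).ne)
end

section
/- Let J ⊆ ℝ be a compact interval and let f_1, …, f_n : ℝ → ℝ satisfy: f_j(J) ⊆ J; f_j is differentiable on J with 0 < f_j'(x) ≤ λ for all x ∈ J, where λ < 1; and there exist C > 0 and ε ∈ (0, 1] such that |log f_j'(x) − log f_j'(y)| ≤ C|x − y|^{ε} for all x, y ∈ J and all j. Then there exists a constant c > 0 (one may take c = C·|J|^{ε}/(1 − λ^{ε})) such that for every finite composition F = f_{j_1} ∘ f_{j_2} ∘ ⋯ ∘ f_{j_m} and all x, y ∈ J, e^{-c} ≤ F'(x)/F'(y) ≤ e^{c}. -/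
/-!
For a composition `F = f_{j₁} ∘ ⋯ ∘ f_{jₘ}` the chain rule writes `log F'` as a sum of the functions
`log f_j'` evaluated along the orbit of the point. The maps contract distances by a factor `λ < 1`,
so after `k` maps the orbits of `x` and `y` are within `λ ^ k * |x - y|` of each other, and the
corresponding term of `log F' x - log F' y` is at most `C * (λ ^ ε) ^ k * |x - y| ^ ε`. Summing the
geometric series bounds the distortion independently of `m`.
-/

open Finset Set
open scoped NNReal

section Holder

variable {X Y : Type*} {C D r : ℝ≥0} {s : Set X}

theorem holderOnWith_of_dist_le [PseudoMetricSpace X] [PseudoMetricSpace Y] {g : X → Y}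
    (h : ∀ x ∈ s, ∀ y ∈ s, dist (g x) (g y) ≤ C * dist x y ^ (r : ℝ)) : HolderOnWith C r g s := by
  intro x hx y hy
  rw [edist_nndist, edist_nndist, ← ENNReal.coe_rpow_of_nonneg _ r.coe_nonneg]
  exact_mod_cast h x hx y hy

theorem holderOnWith_add [PseudoEMetricSpace X] [SeminormedAddCommGroup Y] {g h : X → Y}
    (hg : HolderOnWith C r g s) (hh : HolderOnWith D r h s) :
    HolderOnWith (C + D) r (g + h) s := by
  intro x hx y hy
  calc edist (g x + h x) (g y + h y)
      ≤ edist (g x) (g y) + edist (h x) (h y) := edist_add_add_le _ _ _ _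
    _ ≤ C * edist x y ^ (r : ℝ) + D * edist x y ^ (r : ℝ) :=
        add_le_add (hg x hx y hy) (hh x hx y hy)
    _ = ↑(C + D) * edist x y ^ (r : ℝ) := by rw [ENNReal.coe_add, add_mul]

end Holder

section Word

variable {ι X E : Type*}

/-- The composition `f j₁ ∘ ⋯ ∘ f jₘ` of a family of self-maps along the word `[j₁, …, jₘ]`; the
last letter acts first. -/
def wordMap (f : ι → X → X) (w : List ι) : X → X :=
  w.foldr (fun j g => f j ∘ g) id

/-- The Birkhoff sum along the word `[j₁, …, jₘ]`: each `φ jₖ` is evaluated at the point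
to which `wordMap f [j₁, …, jₘ]` applies `f jₖ`. For `φ j = log ∘ (f j)'` this is the logarithm of
the derivative of the composition. -/
def wordBirkhoffSum [AddZeroClass E] (f : ι → X → X) (φ : ι → X → E) : List ι → X → E
  | [] => 0
  | j :: w => φ j ∘ wordMap f w + wordBirkhoffSum f φ w

variable {f : ι → X → X} {s : Set X}

theorem mapsTo_wordMap (hmaps : ∀ j, MapsTo (f j) s s) (w : List ι) :
    MapsTo (wordMap f w) s s := by
  induction w with
  | nil => exact mapsTo_id s
  | cons j w ih => exact (hmaps j).comp ih

theorem lipschitzOnWith_wordMap [PseudoEMetricSpace X] {K : ℝ≥0}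
    (hmaps : ∀ j, MapsTo (f j) s s) (hf : ∀ j, LipschitzOnWith K (f j) s) (w : List ι) :
    LipschitzOnWith (K ^ w.length) (wordMap f w) s := by
  induction w with
  | nil => exact (LipschitzWith.id.lipschitzOnWith (s := s) :)
  | cons j w ih =>
    rw [List.length_cons, pow_succ']
    exact (hf j).comp ih (mapsTo_wordMap hmaps w)

theorem holderOnWith_wordBirkhoffSum [PseudoEMetricSpace X] [SeminormedAddCommGroup E]
    {K C r : ℝ≥0} {φ : ι → X → E} (hmaps : ∀ j, MapsTo (f j) s s)
    (hf : ∀ j, LipschitzOnWith K (f j) s) (hφ : ∀ j, HolderOnWith C r (φ j) s) (w : List ι) :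
    HolderOnWith (C * ∑ k ∈ range w.length, (K ^ (r : ℝ)) ^ k) r (wordBirkhoffSum f φ w) s := by
  induction w with
  | nil => exact (HolderWith.zero (r := r)).holderOnWith s
  | cons j w ih =>
    have hterm : HolderOnWith (C * (K ^ (r : ℝ)) ^ w.length) r (φ j ∘ wordMap f w) s := by
      have h := (hφ j).comp (lipschitzOnWith_wordMap hmaps hf w).holderOnWith
        (mapsTo_wordMap hmaps w)
      rwa [mul_one, ← NNReal.rpow_natCast_mul, mul_comm (w.length : ℝ),
        NNReal.rpow_mul_natCast] at h
    rw [List.length_cons, sum_range_succ, mul_add, add_comm]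
    exact holderOnWith_add hterm ih

theorem holderOnWith_wordBirkhoffSum_of_lt_one [PseudoEMetricSpace X] [SeminormedAddCommGroup E]
    {K C r : ℝ≥0} {φ : ι → X → E} (hK : K < 1) (hr : 0 < r) (hmaps : ∀ j, MapsTo (f j) s s)
    (hf : ∀ j, LipschitzOnWith K (f j) s) (hφ : ∀ j, HolderOnWith C r (φ j) s) (w : List ι) :
    HolderOnWith (C / (1 - K ^ (r : ℝ))) r (wordBirkhoffSum f φ w) s := by
  refine (holderOnWith_wordBirkhoffSum hmaps hf hφ w).mono_const ?_
  rw [div_eq_mul_inv]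
  gcongr
  exact sum_le_hasSum _ (fun _ _ => zero_le)
    (NNReal.hasSum_geometric (NNReal.rpow_lt_one hK hr))

end Word

section Distortion

variable {ι : Type*} {f f' : ι → ℝ → ℝ} {s t : Set ℝ}

theorem hasDerivWithinAt_wordMap (hmaps : ∀ j, MapsTo (f j) s s) (hmaps_t : ∀ j, MapsTo (f j) t t)
    (hderiv : ∀ j, ∀ x ∈ s, HasDerivWithinAt (f j) (f' j x) t x)
    (hpos : ∀ j, ∀ x ∈ s, 0 < f' j x) (w : List ι) {x : ℝ} (hx : x ∈ s) :
    HasDerivWithinAt (wordMap f w)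
      (Real.exp (wordBirkhoffSum f (fun j => Real.log ∘ f' j) w x)) t x := by
  induction w with
  | nil => simpa [wordMap, wordBirkhoffSum] using hasDerivWithinAt_id x t
  | cons j w ih =>
    have hy : wordMap f w x ∈ s := mapsTo_wordMap hmaps w hx
    have hexp : Real.exp (wordBirkhoffSum f (fun j => Real.log ∘ f' j) (j :: w) x) =
        f' j (wordMap f w x) * Real.exp (wordBirkhoffSum f (fun j => Real.log ∘ f' j) w x) := by
      simp only [wordBirkhoffSum, Pi.add_apply, Function.comp_apply, Real.exp_add,
        Real.exp_log (hpos j _ hy)]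
    rw [hexp]
    exact (hderiv j _ hy).comp x ih (mapsTo_wordMap hmaps_t w)

theorem derivWithin_wordMap_div_mem_Icc {K C r : ℝ≥0} (hK : K < 1) (hr : 0 < r)
    (hbdd : Bornology.IsBounded s) (hdiff : ∀ x ∈ s, UniqueDiffWithinAt ℝ t x)
    (hmaps : ∀ j, MapsTo (f j) s s) (hmaps_t : ∀ j, MapsTo (f j) t t)
    (hf : ∀ j, LipschitzOnWith K (f j) s)
    (hderiv : ∀ j, ∀ x ∈ s, HasDerivWithinAt (f j) (f' j x) t x)
    (hpos : ∀ j, ∀ x ∈ s, 0 < f' j x)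
    (hlog : ∀ j, HolderOnWith C r (Real.log ∘ f' j) s)
    (w : List ι) {x y : ℝ} (hx : x ∈ s) (hy : y ∈ s) :
    derivWithin (wordMap f w) t x / derivWithin (wordMap f w) t y ∈
      Icc (Real.exp (-(↑(C / (1 - K ^ (r : ℝ))) * Metric.diam s ^ (r : ℝ))))
        (Real.exp (↑(C / (1 - K ^ (r : ℝ))) * Metric.diam s ^ (r : ℝ))) := by
  have hF {z : ℝ} (hz : z ∈ s) :=
    (hasDerivWithinAt_wordMap hmaps hmaps_t hderiv hpos w hz).derivWithin (hdiff z hz)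
  have hsum := (holderOnWith_wordBirkhoffSum_of_lt_one hK hr hmaps hf hlog w).dist_le_of_le hx hy
    (Metric.dist_le_diam_of_mem hbdd hx hy)
  rw [hF hx, hF hy, ← Real.exp_sub]
  rw [Real.dist_eq, abs_le] at hsum
  exact ⟨Real.exp_le_exp.2 hsum.1, Real.exp_le_exp.2 hsum.2⟩

/-- Derivatives are taken within `t`, so that `t = s` gives one-sided derivatives at the endpoints
of an interval `s` and `t = univ` gives ordinary ones. -/
theorem bounded_distortion_general (hs : Convex ℝ s) (hbdd : Bornology.IsBounded s) (hst : s ⊆ t)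
    (hdiff : ∀ x ∈ s, UniqueDiffWithinAt ℝ t x)
    {lam : ℝ} (hlam : lam < 1)
    (hmaps : ∀ j, MapsTo (f j) s s) (hmaps_t : ∀ j, MapsTo (f j) t t)
    (hderiv : ∀ j, ∀ x ∈ s, HasDerivWithinAt (f j) (f' j x) t x)
    (hpos : ∀ j, ∀ x ∈ s, 0 < f' j x)
    (hle : ∀ j, ∀ x ∈ s, f' j x ≤ lam)
    {C ε : ℝ} (hC : 0 ≤ C) (hε : 0 < ε)
    (hHolder : ∀ j, ∀ x ∈ s, ∀ y ∈ s,
      |Real.log (f' j x) - Real.log (f' j y)| ≤ C * |x - y| ^ ε) :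
    ∃ c : ℝ, 0 < c ∧ ∀ w : List ι, ∀ x ∈ s, ∀ y ∈ s,
      Real.exp (-c) ≤ derivWithin (wordMap f w) t x / derivWithin (wordMap f w) t y ∧
        derivWithin (wordMap f w) t x / derivWithin (wordMap f w) t y ≤ Real.exp c := by
  lift C to ℝ≥0 using hC
  lift ε to ℝ≥0 using hε.le
  have hlip (j : ι) : LipschitzOnWith lam.toNNReal (f j) s := by
    refine hs.lipschitzOnWith_of_nnnorm_hasDerivWithin_le
      (fun x hx => (hderiv j x hx).mono hst) fun x hx => ?_
    rw [← Real.toNNReal_eq_nnnorm_of_nonneg (hpos j x hx).le]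
    exact Real.toNNReal_le_toNNReal (hle j x hx)
  have hlog (j : ι) : HolderOnWith C ε (Real.log ∘ f' j) s := holderOnWith_of_dist_le (hHolder j)
  set c : ℝ := ↑(C / (1 - lam.toNNReal ^ (ε : ℝ))) * Metric.diam s ^ (ε : ℝ)
  have hc : 0 ≤ c := by positivity
  refine ⟨c + 1, add_pos_of_nonneg_of_pos hc one_pos, fun w x hx y hy => ?_⟩
  exact Icc_subset_Icc (Real.exp_le_exp.2 (by linarith)) (Real.exp_le_exp.2 (by linarith))
    (derivWithin_wordMap_div_mem_Icc (Real.toNNReal_lt_one.2 hlam) hε hbdd hdiff hmaps hmaps_t hlip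
      hderiv hpos hlog w hx hy)

end Distortion

/-- Lemma (uniform bounded distortion): let `J = [a,b]` be a compact interval preserved by
maps `f_1, …, f_n` which are differentiable on `J` with `0 < f_j' ≤ λ < 1` and whose
logarithmic derivatives are `ε`-Hölder with constant `C` on `J`.  Then there is `c > 0`
(one may take `c = C·|J|^ε/(1 − λ^ε)`) such that for every finite composition
`F = f_{j₁} ∘ ⋯ ∘ f_{jₘ}` and all `x, y ∈ J`, `e^{-c} ≤ F'(x)/F'(y) ≤ e^{c}`. -/
theorem bounded_distortion (n : ℕ) (a b : ℝ) (hab : a ≤ b)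
    (f : Fin n → ℝ → ℝ) (f' : Fin n → ℝ → ℝ)
    (lam : ℝ) (hlam : lam < 1)
    (hmaps : ∀ j, ∀ x ∈ Set.Icc a b, f j x ∈ Set.Icc a b)
    (hderiv : ∀ j, ∀ x ∈ Set.Icc a b, HasDerivAt (f j) (f' j x) x)
    (hpos : ∀ j, ∀ x ∈ Set.Icc a b, 0 < f' j x)
    (hle : ∀ j, ∀ x ∈ Set.Icc a b, f' j x ≤ lam)
    (C ε : ℝ) (hC : 0 < C) (hε0 : 0 < ε) (hε1 : ε ≤ 1)
    (hHolder : ∀ j, ∀ x ∈ Set.Icc a b, ∀ y ∈ Set.Icc a b,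
      |Real.log (f' j x) - Real.log (f' j y)| ≤ C * |x - y| ^ ε) :
    ∃ c : ℝ, 0 < c ∧
      ∀ w : List (Fin n), ∀ x ∈ Set.Icc a b, ∀ y ∈ Set.Icc a b,
        Real.exp (-c) ≤
            deriv (w.foldr (fun j g => f j ∘ g) id) x /
              deriv (w.foldr (fun j g => f j ∘ g) id) y ∧
          deriv (w.foldr (fun j g => f j ∘ g) id) x /
              deriv (w.foldr (fun j g => f j ∘ g) id) y ≤ Real.exp c := by
  simpa only [wordMap, derivWithin_univ] using bounded_distortion_general (convex_Icc a b)
    (Metric.isBounded_Icc a b) (subset_univ _) (fun _ _ => uniqueDiffWithinAt_univ) hlam hmaps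
    (fun j => mapsTo_univ (f j) univ) (fun j x hx => (hderiv j x hx).hasDerivWithinAt)
    hpos hle hC.le hε0 hHolder
end

section
/- Let S(λ, c̄, p̄) be an iterated function scheme of similarities f_j(x) = λx + c_j (0 < λ < 1) with probability vector p̄ (p_j > 0), let μ be its stationary measure, and suppose 0 < α < 1 is such that I(μ, α) = ∬ |x − y|^{-α} dμ(x) dμ(y) is finite. Then there exist a compact interval K with f_j(K) ⊆ K for all j, a compact interval J whose interior contains {x − y : x, y ∈ K}, a constant θ > 0, a continuous function φ : ℝ → [0, ∞) with φ(x) > θ for all x ∈ J, a natural number n, and ε > 0, such that for every x ∈ J one has ((D^{(2)}_{α,S})^{n} φ)(x) ≤ (1 − ε) φ(x). -/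
/-!
The operator `D2op` is dual to the self-similarity of the law `ν` of `X - Y`, with `X`, `Y`
independent of law `μ`: it sends `x ↦ ν (closedBall x r)` to
`x ↦ l ^ (-α) * ν (closedBall x (l * r))`. A compactly supported `φ` is dominated by a multiple
of `x ↦ ν (closedBall x ρ)` for `ρ` large, so its `n`-th iterate is at most a constant times
`(l ^ n * ρ) ^ (-α) * ν (closedBall x (l ^ n * ρ))`. For every radius the ball centred at `0` is,
up to the factor `4`, the heaviest one, by the Cauchy-Schwarz inequality on a grid; at `0` the
quantity tends to zero, because it is at most the part of the energy integral carried by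
`|x - y| ≤ l ^ n * ρ`. Hence the iterates tend to zero uniformly, and any bump function equal to
`1` on `J` is contracted.
-/

open MeasureTheory
open scoped ENNReal

/-- The symmetric diffusion operator `D^{(2)}_{α,S}` of an iterated function scheme of
similarities `f_j(x) = λx + c_j` with probability vector `p̄`. -/
noncomputable def D2op (k : ℕ) (l α : ℝ) (c p : Fin k → ℝ) : (ℝ → ℝ) → ℝ → ℝ :=
  fun ψ x => l ^ (-α) * ∑ i, ∑ j, p i * p j * ψ ((x - c i + c j) / l)

open Filter Metric Set Topology

section DifferenceMeasure

variable {G : Type*} [MeasurableSpace G]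

/-- The law of `X - Y` for `X`, `Y` independent with law `μ`. It lets the diffusion operator,
whose translations are the differences `c i - c j`, act on the real line rather than on pairs. -/
noncomputable def diffMeasure [Sub G] (μ : Measure G) : Measure G :=
  (μ.prod μ).map fun q => q.1 - q.2

lemma diffMeasure_apply [Sub G] [MeasurableSub₂ G] (μ : Measure G) {s : Set G}
    (hs : MeasurableSet s) : diffMeasure μ s = μ.prod μ {q | q.1 - q.2 ∈ s} :=
  Measure.map_apply measurable_sub hs

lemma diffMeasure_map_apply {X : Type*} [MeasurableSpace X] [Sub G] [MeasurableSub₂ G]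
    (μ : Measure X) [SFinite μ] {f : X → G} (hf : Measurable f) {s : Set G}
    (hs : MeasurableSet s) :
    diffMeasure (μ.map f) s = μ.prod μ {q | f q.1 - f q.2 ∈ s} := by
  rw [diffMeasure_apply _ hs, Measure.map_prod_map μ μ hf hf]
  exact Measure.map_apply (hf.prodMap hf) (measurable_sub hs)

lemma lintegral_diffMeasure [Sub G] [MeasurableSub₂ G] (μ : Measure G) [SFinite μ]
    {f : G → ℝ≥0∞} (hf : Measurable f) :
    ∫⁻ z, f z ∂diffMeasure μ = ∫⁻ x, ∫⁻ y, f (x - y) ∂μ ∂μ := by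
  rw [diffMeasure, lintegral_map hf measurable_sub]
  exact lintegral_prod _ (hf.comp measurable_sub).aemeasurable

instance [Sub G] (μ : Measure G) [IsFiniteMeasure μ] : IsFiniteMeasure (diffMeasure μ) :=
  inferInstanceAs (IsFiniteMeasure ((μ.prod μ).map _))

instance [Sub G] [MeasurableSub₂ G] (μ : Measure G) [SFinite μ] [NeZero μ] :
    NeZero (diffMeasure μ) := by
  refine ⟨fun h => NeZero.ne μ ?_⟩
  rwa [diffMeasure, Measure.map_eq_zero_iff measurable_sub.aemeasurable,
    ← Measure.measure_univ_eq_zero, ← univ_prod_univ, Measure.prod_prod, mul_self_eq_zero,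
    Measure.measure_univ_eq_zero] at h

lemma two_mul_mul_le_mul_self_add_mul_self (a b : ℝ≥0∞) : 2 * (a * b) ≤ a * a + b * b := by
  wlog h : a ≤ b generalizing a b
  · rw [mul_comm a, add_comm]
    exact this b a (le_of_not_ge h)
  obtain ⟨d, rfl⟩ := exists_add_of_le h
  calc 2 * (a * (a + d)) ≤ 2 * (a * (a + d)) + d * d := le_self_add
    _ = a * a + (a + d) * (a + d) := by ring

lemma tsum_apply_equiv_mul_le {ι : Type*} (a : ι → ℝ≥0∞) (e : ι ≃ ι) :
    ∑' k, a (e k) * a k ≤ ∑' k, a k * a k := by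
  refine (ENNReal.mul_le_mul_iff_right two_ne_zero ENNReal.ofNat_ne_top).1 ?_
  calc 2 * ∑' k, a (e k) * a k = ∑' k, 2 * (a (e k) * a k) := ENNReal.tsum_mul_left.symm
    _ ≤ ∑' k, (a (e k) * a (e k) + a k * a k) :=
      ENNReal.tsum_le_tsum fun k => two_mul_mul_le_mul_self_add_mul_self _ _
    _ = 2 * ∑' k, a k * a k := by
      rw [ENNReal.tsum_add, e.tsum_eq fun k => a k * a k, two_mul]

lemma diffMeasure_singleton [AddGroup G] [MeasurableSub₂ G] [Countable G]
    [MeasurableSingletonClass G] (π : Measure G) [SFinite π] (d : G) :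
    diffMeasure π {d} = ∑' k, π {d + k} * π {k} := by
  let fiber : Set (G × G) := {q | q.1 - q.2 ∈ ({d} : Set G)}
  have hfiber : MeasurableSet fiber := measurable_sub (measurableSet_singleton d)
  have slice (k : G) : (fun x => (x, k)) ⁻¹' fiber = {d + k} := by
    ext x
    simp [fiber, sub_eq_iff_eq_add]
  rw [diffMeasure_apply π (measurableSet_singleton d), Measure.prod_apply_symm hfiber,
    lintegral_countable']
  simp_rw [slice]

lemma diffMeasure_singleton_le [AddGroup G] [MeasurableSub₂ G] [Countable G]
    [MeasurableSingletonClass G] (π : Measure G) [SFinite π] (d : G) :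
    diffMeasure π {d} ≤ diffMeasure π {0} := by
  simpa only [diffMeasure_singleton, zero_add, Equiv.coe_addLeft] using
    tsum_apply_equiv_mul_le (fun k => π {k}) (Equiv.addLeft d)

end DifferenceMeasure

lemma floor_sub_floor_mem_Icc {a b c : ℝ} (h : |a - b - c| ≤ 1) :
    ⌊a⌋ - ⌊b⌋ ∈ Finset.Icc (⌊c⌋ - 1) (⌊c⌋ + 2) := by
  obtain ⟨hl, hu⟩ := abs_le.1 h
  have lower : ⌊b⌋ + ⌊c⌋ - 1 ≤ ⌊a⌋ := by
    rw [Int.le_floor]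
    push_cast
    linarith [Int.floor_le b, Int.floor_le c]
  have upper : ⌊a⌋ < ⌊b⌋ + ⌊c⌋ + 3 := by
    rw [Int.floor_lt]
    push_cast
    linarith [Int.lt_floor_add_one b, Int.lt_floor_add_one c]
  rw [Finset.mem_Icc]
  omega

/-- Rounding to the grid `r ℤ` turns the ball around `x` into four values of the difference of two
integer points, and `0` is the likeliest such value. -/
lemma diffMeasure_closedBall_le (μ : Measure ℝ) [SFinite μ] (x : ℝ) {r : ℝ} (hr : 0 < r) :
    diffMeasure μ (closedBall x r) ≤ 4 * diffMeasure μ (closedBall 0 r) := by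
  let cell : ℝ → ℤ := fun t => ⌊t / r⌋
  have hcell : Measurable cell := Int.measurable_floor.comp (measurable_id.div_const r)
  let values : Finset ℤ := Finset.Icc (⌊x / r⌋ - 1) (⌊x / r⌋ + 2)
  have hvalues : values.card = 4 := by
    rw [Int.card_Icc]
    omega
  have ball_le : diffMeasure μ (closedBall x r) ≤ diffMeasure (μ.map cell) values := by
    rw [diffMeasure_apply μ measurableSet_closedBall,
      diffMeasure_map_apply μ hcell values.measurableSet]
    refine measure_mono fun q hq => floor_sub_floor_mem_Icc ?_
    rw [mem_ofPred_eq, mem_closedBall, Real.dist_eq] at hq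
    rwa [← sub_div, ← sub_div, abs_div, abs_of_pos hr, div_le_one hr]
  have le_ball : diffMeasure (μ.map cell) {0} ≤ diffMeasure μ (closedBall 0 r) := by
    rw [diffMeasure_apply μ measurableSet_closedBall,
      diffMeasure_map_apply μ hcell (measurableSet_singleton 0)]
    refine measure_mono fun q hq => ?_
    have := Int.abs_sub_lt_one_of_floor_eq_floor (sub_eq_zero.1 hq)
    rw [← sub_div, abs_div, abs_of_pos hr, div_lt_one hr] at this
    rw [mem_ofPred_eq, mem_closedBall_zero_iff]
    exact this.le
  calc diffMeasure μ (closedBall x r)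
      ≤ diffMeasure (μ.map cell) values := ball_le
    _ = ∑ d ∈ values, diffMeasure (μ.map cell) {d} := sum_measure_singleton.symm
    _ ≤ values.card • diffMeasure (μ.map cell) {0} :=
      Finset.sum_le_card_nsmul _ _ _ fun d _ => diffMeasure_singleton_le _ d
    _ ≤ 4 * diffMeasure μ (closedBall 0 r) := by
      rw [hvalues, nsmul_eq_mul]
      exact mul_le_mul_right le_ball _

lemma diffMeasure_real_closedBall_le (μ : Measure ℝ) [IsFiniteMeasure μ] (x : ℝ) {r : ℝ}
    (hr : 0 < r) :
    (diffMeasure μ).real (closedBall x r) ≤ 4 * (diffMeasure μ).real (closedBall 0 r) := by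
  simpa [Measure.real] using
    ENNReal.toReal_mono (by finiteness) (diffMeasure_closedBall_le μ x hr)

section Energy

variable {X : Type*} [PseudoMetricSpace X] [MeasurableSpace X] [OpensMeasurableSpace X]
  {ν : Measure X} {x : X} {α : ℝ}

lemma rpow_neg_mul_measure_closedBall_le (hα : 0 ≤ α) (r : ℝ) :
    ENNReal.ofReal r ^ (-α) * ν (closedBall x r) ≤
      ∫⁻ z in closedBall x r, edist z x ^ (-α) ∂ν := by
  rw [← setLIntegral_const]
  refine setLIntegral_mono' measurableSet_closedBall fun z hz => ?_
  rw [ENNReal.rpow_neg, ENNReal.rpow_neg, edist_dist]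
  have : dist z x ≤ r := hz
  gcongr

lemma tendsto_measure_closedBall_zero (hα : 0 < α) (hν : ∫⁻ z, edist z x ^ (-α) ∂ν ≠ ⊤) :
    Tendsto (fun r => ν (closedBall x r)) (𝓝[>] 0) (𝓝 0) := by
  have bound : ∀ᶠ r : ℝ in 𝓝[>] 0,
      ν (closedBall x r) ≤ ENNReal.ofReal r ^ α * ∫⁻ z, edist z x ^ (-α) ∂ν := by
    filter_upwards [self_mem_nhdsWithin] with r hr
    have hr0 : ENNReal.ofReal r ^ α ≠ 0 := by simp_all
    rw [← ENNReal.inv_mul_le_iff hr0 (by finiteness), ← ENNReal.rpow_neg]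
    exact (rpow_neg_mul_measure_closedBall_le hα.le r).trans (setLIntegral_le_lintegral _ _)
  have power : Tendsto (fun r : ℝ => ENNReal.ofReal r ^ α) (𝓝[>] 0) (𝓝 0) := by
    have : Continuous fun r : ℝ => ENNReal.ofReal r ^ α :=
      ENNReal.continuous_rpow_const.comp ENNReal.continuous_ofReal
    simpa [hα] using (this.tendsto 0).mono_left nhdsWithin_le_nhds
  refine tendsto_of_tendsto_of_tendsto_of_le_of_le' tendsto_const_nhds ?_
    (Eventually.of_forall fun _ => zero_le) bound
  simpa using ENNReal.Tendsto.mul_const power (Or.inr hν)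

lemma tendsto_rpow_neg_mul_measureReal_closedBall (hα : 0 < α)
    (hν : ∫⁻ z, edist z x ^ (-α) ∂ν ≠ ⊤) :
    Tendsto (fun r => r ^ (-α) * ν.real (closedBall x r)) (𝓝[>] 0) (𝓝 0) := by
  have h : Tendsto (fun r => ENNReal.ofReal r ^ (-α) * ν (closedBall x r)) (𝓝[>] 0) (𝓝 0) :=
    tendsto_of_tendsto_of_tendsto_of_le_of_le tendsto_const_nhds
      (tendsto_setLIntegral_zero hν (tendsto_measure_closedBall_zero hα hν))
      (fun _ => zero_le) (rpow_neg_mul_measure_closedBall_le hα.le)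
  refine ((ENNReal.tendsto_toReal ENNReal.zero_ne_top).comp h).congr' ?_
  filter_upwards [self_mem_nhdsWithin] with r (hr : 0 < r)
  simp [Measure.real, ENNReal.ofReal_rpow_of_pos hr, Real.rpow_nonneg hr.le]

end Energy

section Domination

variable {X : Type*} [PseudoMetricSpace X] [MeasurableSpace X]

lemma exists_pos_measureReal_closedBall (ν : Measure X) [IsFiniteMeasure ν] [NeZero ν] (x : X) :
    ∃ r > 0, 0 < ν.real (closedBall x r) := by
  obtain ⟨n, hn⟩ := exists_pos_measure_of_cover (iUnion_closedBall_nat x) (NeZero.ne ν)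
  refine ⟨n + 1, by positivity, ENNReal.toReal_pos ?_ (measure_ne_top _ _)⟩
  exact (hn.trans_le (measure_mono (closedBall_subset_closedBall (by simp)))).ne'

lemma exists_abs_le_mul_measureReal_closedBall (ν : Measure X) [IsFiniteMeasure ν] [NeZero ν]
    {φ : X → ℝ} (hφ : Continuous φ) (hsupp : HasCompactSupport φ) :
    ∃ A ρ, 0 ≤ A ∧ 0 < ρ ∧ ∀ x, |φ x| ≤ A * ν.real (closedBall x ρ) := by
  obtain ⟨x₀⟩ : Nonempty X := ν.nonempty_of_neZero
  obtain ⟨r, hr, hpos⟩ := exists_pos_measureReal_closedBall ν x₀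
  obtain ⟨M, hM⟩ := hsupp.exists_bound_of_continuous hφ
  obtain ⟨R, hR⟩ := hsupp.isBounded.subset_closedBall x₀
  have hM0 : 0 ≤ M := (norm_nonneg _).trans (hM x₀)
  refine ⟨M / ν.real (closedBall x₀ r), r + |R|, by positivity, by positivity, fun x => ?_⟩
  by_cases hx : φ x = 0
  · rw [hx, abs_zero]
    positivity
  have hxR : dist x₀ x ≤ |R| := by
    rw [dist_comm]
    exact (hR (subset_tsupport φ hx)).trans (le_abs_self R)
  calc |φ x| ≤ M := hM x
    _ = M / ν.real (closedBall x₀ r) * ν.real (closedBall x₀ r) := (div_mul_cancel₀ M hpos.ne').symm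
    _ ≤ _ := by
      gcongr
      · finiteness
      · exact closedBall_subset_closedBall' (by gcongr)

end Domination

section SelfSimilar

variable {ι : Type*} [Fintype ι] {l : ℝ} {c p : ι → ℝ} {μ : Measure ℝ}

/-- `μ` satisfies the self-similarity equation of the scheme of similarities `x ↦ l * x + c j`
with weights `p j`. No normalization of `p` or `μ` is included. -/
def IsSelfSimilar (l : ℝ) (c p : ι → ℝ) (μ : Measure ℝ) : Prop :=
  μ = ∑ j, ENNReal.ofReal (p j) • μ.map fun x => l * x + c j

lemma isSelfSimilar_diffMeasure [SFinite μ] (hμ : IsSelfSimilar l c p μ) (hp : ∀ j, 0 ≤ p j) :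
    IsSelfSimilar l (fun q : ι × ι => c q.1 - c q.2) (fun q => p q.1 * p q.2)
      (diffMeasure μ) := by
  have hf (j : ι) : Measurable fun x : ℝ => l * x + c j := by fun_prop
  have hsum : μ = Measure.sum fun j => ENNReal.ofReal (p j) • μ.map fun x => l * x + c j := by
    rw [Measure.sum_fintype]
    exact hμ
  rw [IsSelfSimilar, diffMeasure]
  conv_lhs => rw [hsum, Measure.prod_sum, Measure.sum_fintype,
    Measure.map_finset_sum' (by fun_prop)]
  refine Finset.sum_congr rfl fun q _ => ?_
  rw [Measure.prod_smul_left, Measure.prod_smul_right, smul_smul, Measure.map_smul,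
    ENNReal.ofReal_mul (hp q.1), Measure.map_prod_map μ μ (hf q.1) (hf q.2),
    Measure.map_map (by fun_prop) ((hf q.1).prodMap (hf q.2)),
    Measure.map_map (by fun_prop) (by fun_prop)]
  congr 2
  funext z
  simp only [Function.comp_apply, Prod.map_fst, Prod.map_snd]
  ring

lemma preimage_similarity_closedBall (hl : 0 < l) (a x r : ℝ) :
    (fun y => l * y + a) ⁻¹' closedBall x (l * r) = closedBall ((x - a) / l) r := by
  ext y
  have : l * y + a - x = l * (y - (x - a) / l) := by
    field_simp
    ring
  rw [mem_preimage, mem_closedBall, mem_closedBall, Real.dist_eq, Real.dist_eq, this, abs_mul,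
    abs_of_pos hl, mul_le_mul_iff_right₀ hl]

lemma IsSelfSimilar.measureReal_closedBall [IsFiniteMeasure μ] (hμ : IsSelfSimilar l c p μ)
    (hl : 0 < l) (hp : ∀ j, 0 ≤ p j) (x r : ℝ) :
    μ.real (closedBall x (l * r)) = ∑ j, p j * μ.real (closedBall ((x - c j) / l) r) := by
  have hball : μ (closedBall x (l * r)) =
      ∑ j, ENNReal.ofReal (p j) * μ (closedBall ((x - c j) / l) r) := by
    conv_lhs => rw [hμ]
    simp_rw [Measure.finsetSum_apply, Measure.smul_apply, smul_eq_mul]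
    refine Finset.sum_congr rfl fun j _ => ?_
    rw [Measure.map_apply (by fun_prop) measurableSet_closedBall,
      preimage_similarity_closedBall hl]
  rw [Measure.real, hball, ENNReal.toReal_sum fun j _ => by finiteness]
  simp_rw [ENNReal.toReal_mul, ENNReal.toReal_ofReal (hp _), Measure.real]

end SelfSimilar

section DiffusionOperator

variable {k : ℕ} {l α : ℝ} {c p : Fin k → ℝ}

lemma D2op_monotone (hl : 0 ≤ l) (hp : ∀ j, 0 ≤ p j) : Monotone (D2op k l α c p) := by
  intro φ ψ h x
  unfold D2op
  gcongr
  · exact mul_nonneg (hp _) (hp _)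
  · exact h _

lemma D2op_iterate_measureReal_closedBall {ν : Measure ℝ} [IsFiniteMeasure ν] (hl : 0 < l)
    (hp : ∀ j, 0 ≤ p j)
    (hν : IsSelfSimilar l (fun q : Fin k × Fin k => c q.1 - c q.2) (fun q => p q.1 * p q.2) ν)
    (A r : ℝ) (n : ℕ) :
    (D2op k l α c p)^[n] (fun x => A * ν.real (closedBall x r)) =
      fun x => A * (l ^ (-α)) ^ n * ν.real (closedBall x (l ^ n * r)) := by
  induction n with
  | zero => simp
  | succ n ih =>
    rw [Function.iterate_succ_apply', ih]
    funext x
    rw [pow_succ' l, mul_assoc l,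
      hν.measureReal_closedBall hl (fun q => mul_nonneg (hp _) (hp _)), Fintype.sum_prod_type]
    simp only [D2op, Finset.mul_sum, sub_add]
    refine Finset.sum_congr rfl fun i _ => Finset.sum_congr rfl fun j _ => ?_
    ring

lemma D2op_neg (ψ : ℝ → ℝ) : D2op k l α c p (-ψ) = -D2op k l α c p ψ := by
  funext x
  simp [D2op]

lemma abs_D2op_iterate_le {φ ψ : ℝ → ℝ} (hl : 0 ≤ l) (hp : ∀ j, 0 ≤ p j)
    (h : ∀ x, |φ x| ≤ ψ x) (n : ℕ) (x : ℝ) :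
    |(D2op k l α c p)^[n] φ x| ≤ (D2op k l α c p)^[n] ψ x := by
  have mono : Monotone (D2op k l α c p)^[n] := (D2op_monotone hl hp).iterate n
  have neg : (D2op k l α c p)^[n] (-ψ) = -(D2op k l α c p)^[n] ψ :=
    Function.Commute.iterate_left (g := Neg.neg) D2op_neg n ψ
  have lower := mono (a := -ψ) (b := φ) (fun y => (abs_le.1 (h y)).1) x
  rw [neg] at lower
  exact abs_le.2 ⟨lower, mono (fun y => (abs_le.1 (h y)).2) x⟩

lemma pow_rpow_neg_eq {ρ : ℝ} (hl : 0 < l) (hρ : 0 < ρ) (n : ℕ) :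
    (l ^ (-α)) ^ n = ρ ^ α * (l ^ n * ρ) ^ (-α) := by
  rw [Real.mul_rpow (by positivity) hρ.le, ← Real.rpow_natCast_mul hl.le,
    ← Real.rpow_mul_natCast hl.le, mul_left_comm, ← Real.rpow_add hρ]
  simp [mul_comm]

variable {μ : Measure ℝ} [IsFiniteMeasure μ] [NeZero μ] {φ : ℝ → ℝ}

lemma exists_abs_D2op_iterate_le_mul_measureReal (hl : 0 < l) (hp : ∀ j, 0 ≤ p j)
    (hμ : IsSelfSimilar l c p μ) (hφ : Continuous φ) (hsupp : HasCompactSupport φ) :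
    ∃ C ρ, 0 < ρ ∧ ∀ n x, |(D2op k l α c p)^[n] φ x| ≤
      C * ((l ^ n * ρ) ^ (-α) * (diffMeasure μ).real (closedBall 0 (l ^ n * ρ))) := by
  let ν := diffMeasure μ
  obtain ⟨A, ρ, hA, hρ, hdom⟩ := exists_abs_le_mul_measureReal_closedBall ν hφ hsupp
  refine ⟨4 * A * ρ ^ α, ρ, hρ, fun n x => ?_⟩
  calc |(D2op k l α c p)^[n] φ x|
      ≤ (D2op k l α c p)^[n] (fun y => A * ν.real (closedBall y ρ)) x :=
        abs_D2op_iterate_le hl.le hp hdom n x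
    _ = A * (l ^ (-α)) ^ n * ν.real (closedBall x (l ^ n * ρ)) := by
        rw [D2op_iterate_measureReal_closedBall hl hp (isSelfSimilar_diffMeasure hμ hp)]
    _ ≤ A * (l ^ (-α)) ^ n * (4 * ν.real (closedBall 0 (l ^ n * ρ))) := by
        gcongr
        exact diffMeasure_real_closedBall_le μ x (by positivity)
    _ = 4 * A * ρ ^ α * ((l ^ n * ρ) ^ (-α) * ν.real (closedBall 0 (l ^ n * ρ))) := by
        rw [pow_rpow_neg_eq hl hρ]
        ring

theorem tendstoUniformly_D2op_iterate (hl0 : 0 < l) (hl1 : l < 1) (hp : ∀ j, 0 ≤ p j)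
    (hμ : IsSelfSimilar l c p μ) (hα : 0 < α)
    (hfin : ∫⁻ x, ∫⁻ y, edist x y ^ (-α) ∂μ ∂μ ≠ ⊤) (hφ : Continuous φ)
    (hsupp : HasCompactSupport φ) :
    TendstoUniformly (fun n => (D2op k l α c p)^[n] φ) 0 atTop := by
  obtain ⟨C, ρ, hρ, bound⟩ :=
    exists_abs_D2op_iterate_le_mul_measureReal (α := α) hl0 hp hμ hφ hsupp
  have energy : ∫⁻ z, edist z 0 ^ (-α) ∂diffMeasure μ ≠ ⊤ := by
    rw [lintegral_diffMeasure μ (by fun_prop)]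
    simpa only [edist_zero_right, ← edist_eq_enorm_sub] using hfin
  have radii : Tendsto (fun n : ℕ => l ^ n * ρ) atTop (𝓝[>] 0) := by
    have positive (n : ℕ) : l ^ n * ρ ∈ Ioi 0 := mul_pos (pow_pos hl0 n) hρ
    refine tendsto_nhdsWithin_iff.2 ⟨?_, Eventually.of_forall positive⟩
    simpa using (tendsto_pow_atTop_nhds_zero_of_lt_one hl0.le hl1).mul_const ρ
  have limit := ((tendsto_rpow_neg_mul_measureReal_closedBall hα energy).comp radii).const_mul C
  rw [mul_zero] at limit
  refine Metric.tendstoUniformly_iff.2 fun ε hε => ?_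
  filter_upwards [limit.eventually_lt_const hε] with n hn x
  rw [dist_comm, Pi.zero_apply, Real.dist_0_eq_abs]
  exact (bound n x).trans_lt hn

end DiffusionOperator

lemma exists_mapsTo_Icc {ι : Type*} [Finite ι] {l : ℝ} (hl : |l| < 1) (c : ι → ℝ) :
    ∃ R ≥ 0, ∀ j, MapsTo (fun x => l * x + c j) (Icc (-R) R) (Icc (-R) R) := by
  obtain ⟨M, hM⟩ := (finite_range fun j => |c j|).bddAbove
  have h1l : 0 < 1 - |l| := sub_pos.2 hl
  refine ⟨|M| / (1 - |l|), by positivity, fun j x hx => ?_⟩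
  have hcj : |c j| ≤ |M| := (hM (mem_range_self j)).trans (le_abs_self M)
  refine abs_le.1 ?_
  calc |l * x + c j| ≤ |l| * |x| + |c j| := (abs_add_le _ _).trans_eq (by rw [abs_mul])
    _ ≤ |l| * (|M| / (1 - |l|)) + |M| := by
      gcongr
      exact abs_le.2 hx
    _ = |M| / (1 - |l|) := by
      field_simp
      ring

/-- Lemma: if the stationary measure `μ` of an iterated function scheme of similarities
has finite energy `I(μ, α)` for some `0 < α < 1`, then there are an invariant compact
interval `K`, an admissible compact interval `J`, `θ > 0`, a continuous nonnegative
function `φ` with `φ > θ` on `J`, a natural number `n` and `ε > 0` such that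
`(D^{(2)}_{α,S})^n φ ≤ (1 − ε) φ` on `J`. -/
theorem finding_contracted_test_function (k : ℕ) (l : ℝ) (hl0 : 0 < l) (hl1 : l < 1)
    (c : Fin k → ℝ) (p : Fin k → ℝ) (hp : ∀ j, 0 < p j) (hpsum : ∑ j, p j = 1)
    (μ : Measure ℝ) [IsProbabilityMeasure μ]
    (hμ : μ = ∑ j, ENNReal.ofReal (p j) • Measure.map (fun x : ℝ => l * x + c j) μ)
    (α : ℝ) (hα0 : 0 < α) (hα1 : α < 1)
    (hfin : (∫⁻ x, ∫⁻ y, (ENNReal.ofReal |x - y|) ^ (-α) ∂μ ∂μ) ≠ ⊤) :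
    ∃ (a b : ℝ), a ≤ b ∧ (∀ j, ∀ x ∈ Set.Icc a b, l * x + c j ∈ Set.Icc a b) ∧
    ∃ (u v : ℝ), u ≤ v ∧
      {z : ℝ | ∃ x ∈ Set.Icc a b, ∃ y ∈ Set.Icc a b, z = x - y}
        ⊆ interior (Set.Icc u v) ∧
    ∃ θ : ℝ, 0 < θ ∧
    ∃ φ : ℝ → ℝ, Continuous φ ∧ (∀ x, 0 ≤ φ x) ∧ (∀ x ∈ Set.Icc u v, θ < φ x) ∧
    ∃ (m : ℕ) (ε : ℝ), 0 < ε ∧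
      ∀ x ∈ Set.Icc u v, (D2op k l α c p)^[m] φ x ≤ (1 - ε) * φ x := by
  obtain ⟨R, hR, hK⟩ := exists_mapsTo_Icc (by rwa [abs_of_pos hl0]) c
  obtain ⟨φ, hφ_one, -, hφ_supp, hφ_mem⟩ :=
    exists_continuous_one_zero_of_isCompact (isCompact_Icc (a := -(2 * R + 1)) (b := 2 * R + 1))
      isClosed_empty (disjoint_empty _)
  have henergy : ∫⁻ x, ∫⁻ y, edist x y ^ (-α) ∂μ ∂μ ≠ ⊤ := by
    simpa only [edist_dist, Real.dist_eq] using hfin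
  have hlim := tendstoUniformly_D2op_iterate hl0 hl1 (fun j => (hp j).le) hμ hα0 henergy
    φ.continuous hφ_supp
  obtain ⟨m, hm⟩ := (Metric.tendstoUniformly_iff.1 hlim (1 / 2) one_half_pos).exists
  refine ⟨-R, R, by linarith, hK, -(2 * R + 1), 2 * R + 1, by linarith, ?_, 1 / 2, one_half_pos,
    φ, φ.continuous, fun x => (hφ_mem x).1, fun x hx => ?_, m, 1 / 2, one_half_pos, fun x hx => ?_⟩
  · rw [interior_Icc]
    rintro z ⟨x, hx, y, hy, rfl⟩
    constructor <;> linarith [hx.1, hx.2, hy.1, hy.2]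
  · rw [hφ_one hx]
    exact one_half_lt_one
  · have hsmall := hm x
    rw [Pi.zero_apply, dist_comm, Real.dist_0_eq_abs] at hsmall
    rw [hφ_one hx, Pi.one_apply]
    linarith [le_abs_self ((D2op k l α c p)^[m] φ x)]
end

section
/- Let J ⊆ ℝ be a compact interval and let f_1, …, f_n : ℝ → ℝ be C^{1+ε} orientation-preserving bijections (each f_j' is positive, Hölder continuous with some exponent ε > 0, and satisfies f_j'(x) ≤ λ_max for some constant λ_max < 1) with f_j(J) ⊆ J for all j, let p̄ be a probability vector with p_j > 0, and let μ be a Borel probability measure with μ = ∑_j p_j (f_j)_*μ. Suppose α > 0 is such that there exist ᾱ > α and C > 0 with μ(B_ρ(x)) ≤ C ρ^{ᾱ} for all x ∈ ℝ and ρ > 0. Then there exists r > 0 such that the sup-norms of the iterates of the indicator of B_r(J) under the asymmetric diffusion operator tend to zero: lim_{n→∞} sup_{x∈ℝ} |((D^{(1)}_{α,T})^{n} 𝟙_{B_r(J)})(x)| = 0. -/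
open MeasureTheory
open scoped ENNReal

/-- The asymmetric diffusion operator `D^{(1)}_{α,T}` of an iterated function scheme of
contracting diffeomorphisms `f_j` with probability vector `p̄`:
`ψ ↦ ∑_j p_j |(f_j^{-1})'(x)|^α ψ(f_j^{-1}(x))`. -/
noncomputable def D1op (n : ℕ) (α : ℝ) (f : Fin n → ℝ → ℝ) (p : Fin n → ℝ) :
    (ℝ → ℝ) → ℝ → ℝ :=
  fun ψ x => ∑ j, p j * |deriv (Function.invFun (f j)) x| ^ α *
    ψ (Function.invFun (f j) x)

/-! The truncated Riesz potential `V_ρ(x) = ∫_{B_ρ(x)} |y - x|^{-α} dμ(y)` is almost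
decreased by the diffusion operator. On a compact invariant set, bounded distortion gives
`|f_j'(u)|^{-α} |z - u|^{-α} ≤ e^{O(ρ^ε)} |f_j(z) - f_j(u)|^{-α}` for `|z - u| ≤ ρ`, and since `f_j`
contracts by `λ`, integrating against the stationary measure yields
`D^{(1)} V_ρ ≤ e^{O(ρ^ε)} V_{λρ}`. The exponents `(λ^m ρ)^ε` form a geometric series, so a function
dominated by `V_ρ` has `m`-th iterate dominated by a constant multiple of `V_{λ^m ρ}`, which tends
to zero uniformly because `μ(B_ρ(x)) = O(ρ^ᾱ)` with `ᾱ > α`. -/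

open Set Filter Function Metric Bornology
open scoped NNReal Topology

section RieszPotential

variable {X Y : Type*} [PseudoMetricSpace X] [MeasurableSpace X] [PseudoMetricSpace Y]
  [MeasurableSpace Y] {μ : Measure X} {α ρ : ℝ}

/-- The Riesz potential of order `α` of `μ` at `x`, with the kernel cut off outside the closed ball
of radius `ρ`. For `α > 0` the kernel is `∞` at points at distance zero from `x`. -/
noncomputable def truncatedRieszPotential (μ : Measure X) (α ρ : ℝ) (x : X) : ℝ≥0∞ :=
  ∫⁻ y in closedBall x ρ, edist y x ^ (-α) ∂μ

lemma truncatedRieszPotential_finsetSum_smul {ι : Type*} (s : Finset ι) (c : ι → ℝ≥0∞)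
    (ν : ι → Measure X) (α ρ : ℝ) (x : X) :
    truncatedRieszPotential (∑ i ∈ s, c i • ν i) α ρ x =
      ∑ i ∈ s, c i * truncatedRieszPotential (ν i) α ρ x := by
  simp only [truncatedRieszPotential, ← Measure.restrictₗ_apply, map_sum, map_smul,
    lintegral_finsetSum_measure, lintegral_smul_measure, smul_eq_mul]

lemma rpow_neg_mul_measure_closedBall_le_truncatedRieszPotential [OpensMeasurableSpace X]
    (μ : Measure X) (hα : 0 ≤ α) (ρ : ℝ) (x : X) :
    ENNReal.ofReal ρ ^ (-α) * μ (closedBall x ρ) ≤ truncatedRieszPotential μ α ρ x := by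
  rw [truncatedRieszPotential, ← setLIntegral_const]
  refine setLIntegral_mono' measurableSet_closedBall fun y hy => ?_
  rw [ENNReal.rpow_neg, ENNReal.rpow_neg, ENNReal.inv_le_inv, edist_dist]
  exact ENNReal.rpow_le_rpow (ENNReal.ofReal_le_ofReal hy) hα

lemma exists_le_truncatedRieszPotential [OpensMeasurableSpace X] [NeZero μ] (hα : 0 ≤ α)
    {S : Set X} (hS : IsBounded S) :
    ∃ ρ > 0, ∃ b : ℝ≥0, 0 < b ∧ ∀ x ∈ S, (b : ℝ≥0∞) ≤ truncatedRieszPotential μ α ρ x := by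
  obtain ⟨o⟩ : Nonempty X := Measure.nonempty_of_neZero μ
  obtain ⟨N, hN⟩ : ∃ N : ℕ, 0 < μ (closedBall o N) := by
    by_contra! h
    refine NeZero.ne μ (Measure.measure_univ_eq_zero.1 ?_)
    rw [← iUnion_closedBall_nat o]
    exact measure_iUnion_null fun N => nonpos_iff_eq_zero.1 (h N)
  obtain ⟨R, hR⟩ := hS.subset_closedBall o
  obtain ⟨ρ, hρ, hNR⟩ : ∃ ρ > 0, N + R ≤ ρ := ⟨max 1 (N + R), by positivity, le_max_right _ _⟩
  have hmass : 0 < ENNReal.ofReal ρ ^ (-α) * μ (closedBall o N) :=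
    ENNReal.mul_pos (by simp [hρ]) hN.ne'
  obtain ⟨b, hb, hbV⟩ := ENNReal.lt_iff_exists_nnreal_btwn.1 hmass
  refine ⟨ρ, hρ, b, by exact_mod_cast hb, fun x hx => hbV.le.trans ?_⟩
  refine le_trans ?_ (rpow_neg_mul_measure_closedBall_le_truncatedRieszPotential μ hα ρ x)
  gcongr
  refine closedBall_subset_closedBall' ?_
  have := mem_closedBall'.1 (hR hx)
  linarith

lemma exists_enorm_le_mul_truncatedRieszPotential [OpensMeasurableSpace X] [NeZero μ] {E : Type*}
    [SeminormedAddCommGroup E] (hα : 0 ≤ α) {ψ : X → E} {M : ℝ} (hψM : ∀ x, ‖ψ x‖ ≤ M)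
    (hψ : IsBounded (support ψ)) :
    ∃ ρ > 0, ∃ A : ℝ≥0∞, A ≠ ∞ ∧ ∀ x, ‖ψ x‖ₑ ≤ A * truncatedRieszPotential μ α ρ x := by
  obtain ⟨ρ, hρ, b, hb, hbV⟩ := exists_le_truncatedRieszPotential (μ := μ) hα hψ
  have hb' : (b : ℝ≥0∞) ≠ 0 := by exact_mod_cast hb.ne'
  refine ⟨ρ, hρ, ENNReal.ofReal M / b, ENNReal.div_ne_top ENNReal.ofReal_ne_top hb', fun x => ?_⟩
  by_cases hx : x ∈ support ψ
  · calc ‖ψ x‖ₑ ≤ ENNReal.ofReal M := by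
          rw [← ofReal_norm]; exact ENNReal.ofReal_le_ofReal (hψM x)
      _ = ENNReal.ofReal M / b * b := (ENNReal.div_mul_cancel hb' ENNReal.coe_ne_top).symm
      _ ≤ ENNReal.ofReal M / b * truncatedRieszPotential μ α ρ x := by gcongr; exact hbV x hx
  · simp [notMem_support.1 hx, ← ofReal_norm]

lemma rpow_neg_mul_truncatedRieszPotential_le_map [OpensMeasurableSpace X] [OpensMeasurableSpace Y]
    {f : X → Y} (hf : Measurable f) (hα : 0 ≤ α) {L : ℝ≥0} {ρ' : ℝ} {u : X}
    (hmaps : MapsTo f (closedBall u ρ) (closedBall (f u) ρ'))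
    (hL : ∀ z ∈ closedBall u ρ, edist (f z) (f u) ≤ L * edist z u) :
    (L : ℝ≥0∞) ^ (-α) * truncatedRieszPotential μ α ρ u ≤
      truncatedRieszPotential (μ.map f) α ρ' (f u) := by
  have hmeas (v : Y) : Measurable fun w : Y => edist w v ^ (-α) := by fun_prop
  calc (L : ℝ≥0∞) ^ (-α) * truncatedRieszPotential μ α ρ u
      = ∫⁻ z in closedBall u ρ, (L * edist z u) ^ (-α) ∂μ := by
        rw [truncatedRieszPotential, ← lintegral_const_mul _ (by fun_prop)]
        simp_rw [ENNReal.mul_rpow_of_ne_top ENNReal.coe_ne_top (edist_ne_top _ _)]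
    _ ≤ ∫⁻ z in closedBall u ρ, edist (f z) (f u) ^ (-α) ∂μ := by
        refine setLIntegral_mono' measurableSet_closedBall fun z hz => ?_
        rw [ENNReal.rpow_neg, ENNReal.rpow_neg, ENNReal.inv_le_inv]
        exact ENNReal.rpow_le_rpow (hL z hz) hα
    _ ≤ ∫⁻ z in f ⁻¹' closedBall (f u) ρ', edist (f z) (f u) ^ (-α) ∂μ := lintegral_mono_set hmaps
    _ = truncatedRieszPotential (μ.map f) α ρ' (f u) :=
        (setLIntegral_map measurableSet_closedBall (hmeas _) hf).symm

lemma tendsto_ofReal_const_mul_rpow_zero {β : ℝ} (C : ℝ) (hβ : 0 < β) :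
    Tendsto (fun ρ : ℝ => ENNReal.ofReal (C * ρ ^ β)) (𝓝 0) (𝓝 0) := by
  have hcont : Continuous fun ρ : ℝ => ENNReal.ofReal (C * ρ ^ β) :=
    ENNReal.continuous_ofReal.comp ((Real.continuous_rpow_const hβ.le).const_mul C)
  simpa [Real.zero_rpow hβ.ne'] using hcont.tendsto 0

lemma measure_closedBall_zero_eq_zero {β C : ℝ} {x : X} (hβ : 0 < β)
    (hreg : ∀ ρ > 0, μ (closedBall x ρ) ≤ ENNReal.ofReal (C * ρ ^ β)) :
    μ (closedBall x 0) = 0 := by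
  refine nonpos_iff_eq_zero.1 (ge_of_tendsto
    ((tendsto_ofReal_const_mul_rpow_zero C hβ).mono_left (nhdsWithin_le_nhds (s := Ioi 0))) ?_)
  filter_upwards [self_mem_nhdsWithin] with ρ hρ
  exact (measure_mono (closedBall_subset_closedBall (le_of_lt hρ))).trans (hreg ρ hρ)

lemma truncatedRieszPotential_le_tsum [OpensMeasurableSpace X] (hα : 0 ≤ α) {q : ℝ} (hq0 : 0 < q)
    (hq1 : q < 1) (hρ : 0 < ρ) {x : X} (hx : μ (closedBall x 0) = 0) :
    truncatedRieszPotential μ α ρ x ≤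
      ∑' k : ℕ, ENNReal.ofReal ((q ^ (k + 1) * ρ) ^ (-α)) * μ (closedBall x (q ^ k * ρ)) := by
  have hpointwise : ∀ᵐ y ∂μ, y ∈ closedBall x ρ → edist y x ^ (-α) ≤
      ∑' k : ℕ, (closedBall x (q ^ k * ρ)).indicator
        (fun _ => ENNReal.ofReal ((q ^ (k + 1) * ρ) ^ (-α))) y := by
    filter_upwards [measure_eq_zero_iff_ae_notMem.1 hx] with y hy0 hyρ
    have hpos : 0 < dist y x := not_le.1 hy0
    obtain ⟨k, hlt, hle⟩ := exists_nat_pow_near_of_lt_one (div_pos hpos hρ)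
      ((div_le_one hρ).2 hyρ) hq0 hq1
    rw [lt_div_iff₀ hρ] at hlt
    rw [div_le_iff₀ hρ] at hle
    refine le_trans ?_ (ENNReal.le_tsum k)
    rw [indicator_of_mem (mem_closedBall.2 hle), edist_dist, ENNReal.ofReal_rpow_of_pos hpos]
    exact ENNReal.ofReal_le_ofReal
      (Real.rpow_le_rpow_of_nonpos (by positivity) hlt.le (neg_nonpos.2 hα))
  calc truncatedRieszPotential μ α ρ x
      ≤ ∫⁻ y in closedBall x ρ, ∑' k : ℕ, (closedBall x (q ^ k * ρ)).indicator
          (fun _ => ENNReal.ofReal ((q ^ (k + 1) * ρ) ^ (-α))) y ∂μ :=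
        lintegral_mono_ae ((ae_restrict_iff' measurableSet_closedBall).2 hpointwise)
    _ ≤ ∫⁻ y, ∑' k : ℕ, (closedBall x (q ^ k * ρ)).indicator
          (fun _ => ENNReal.ofReal ((q ^ (k + 1) * ρ) ^ (-α))) y ∂μ := setLIntegral_le_lintegral _ _
    _ = _ := by
        rw [lintegral_tsum fun k =>
          (measurable_const.indicator measurableSet_closedBall).aemeasurable]
        simp only [lintegral_indicator_const measurableSet_closedBall]

lemma truncatedRieszPotential_le_of_measure_closedBall_le [OpensMeasurableSpace X] {β C q : ℝ}
    (hα : 0 ≤ α) (hαβ : α < β) (hC : 0 ≤ C) (hq0 : 0 < q) (hq1 : q < 1) (hρ : 0 < ρ) {x : X}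
    (hreg : ∀ r > 0, μ (closedBall x r) ≤ ENNReal.ofReal (C * r ^ β)) :
    truncatedRieszPotential μ α ρ x ≤
      ENNReal.ofReal (C * q ^ (-α) / (1 - q ^ (β - α)) * ρ ^ (β - α)) := by
  have hratio : q ^ (β - α) < 1 := Real.rpow_lt_one hq0.le hq1 (sub_pos.2 hαβ)
  have hterm (k : ℕ) : (q ^ (k + 1) * ρ) ^ (-α) * (C * (q ^ k * ρ) ^ β) =
      C * q ^ (-α) * ρ ^ (β - α) * (q ^ (β - α)) ^ k := by
    have hqk : 0 < q ^ k := pow_pos hq0 k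
    rw [Real.rpow_pow_comm hq0.le, pow_succ, Real.mul_rpow (by positivity) hρ.le,
      Real.mul_rpow hqk.le hq0.le, Real.mul_rpow hqk.le hρ.le, sub_eq_add_neg,
      Real.rpow_add hρ, Real.rpow_add hqk]
    ring
  calc truncatedRieszPotential μ α ρ x
      ≤ ∑' k : ℕ, ENNReal.ofReal ((q ^ (k + 1) * ρ) ^ (-α)) * μ (closedBall x (q ^ k * ρ)) :=
        truncatedRieszPotential_le_tsum hα hq0 hq1 hρ
          (measure_closedBall_zero_eq_zero (hα.trans_lt hαβ) hreg)
    _ ≤ ∑' k : ℕ, ENNReal.ofReal (C * q ^ (-α) * ρ ^ (β - α) * (q ^ (β - α)) ^ k) := by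
        refine ENNReal.tsum_le_tsum fun k => ?_
        rw [← hterm, ENNReal.ofReal_mul (by positivity)]
        gcongr
        exact hreg _ (by positivity)
    _ = ENNReal.ofReal (C * q ^ (-α) / (1 - q ^ (β - α)) * ρ ^ (β - α)) := by
        rw [← ENNReal.ofReal_tsum_of_nonneg (fun k => by positivity)
          ((summable_geometric_of_lt_one (by positivity) hratio).mul_left _), tsum_mul_left,
          tsum_geometric_of_lt_one (by positivity) hratio]
        congr 1
        ring

end RieszPotential

section MetricSpace

lemma tendstoUniformly_zero_of_enorm_le {ι X E : Type*} [SeminormedAddCommGroup E] {l : Filter ι}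
    {F : ι → X → E} {b : ι → ℝ≥0∞} (hF : ∀ i x, ‖F i x‖ₑ ≤ b i) (hb : Tendsto b l (𝓝 0)) :
    TendstoUniformly F 0 l := by
  refine EMetric.tendstoUniformly_iff.2 fun δ hδ => ?_
  filter_upwards [hb.eventually_lt_const hδ] with i hi x
  simpa [edist_comm] using (hF i x).trans_lt hi

lemma continuous_of_dist_le_mul_rpow {X Y : Type*} [PseudoMetricSpace X] [PseudoMetricSpace Y]
    {f : X → Y} {C r : ℝ} (hr : 0 < r) (hf : ∀ x y, dist (f x) (f y) ≤ C * dist x y ^ r) :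
    Continuous f := by
  refine continuous_iff_continuousAt.2 fun x => tendsto_iff_dist_tendsto_zero.2 ?_
  have hbound : Continuous fun y => C * dist y x ^ r :=
    (Continuous.rpow_const (by fun_prop) fun _ => Or.inr hr.le).const_mul C
  refine squeeze_zero (fun _ => dist_nonneg) (fun y => hf y x) ?_
  simpa [Real.zero_rpow hr.ne'] using hbound.tendsto x

lemma exists_mapsTo_closedBall_of_lipschitzWith {ι X : Type*} [Finite ι] [PseudoMetricSpace X]
    {f : ι → X → X} {K : ℝ≥0} (hK : K < 1) (hf : ∀ i, LipschitzWith K (f i)) (o : X) {S : Set X}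
    (hS : IsBounded S) :
    ∃ R, S ⊆ closedBall o R ∧ ∀ i, MapsTo (f i) (closedBall o R) (closedBall o R) := by
  have hK' : 0 < 1 - (K : ℝ) := sub_pos.2 hK
  obtain ⟨R₀, hR₀⟩ := hS.subset_closedBall o
  obtain ⟨M, hM⟩ := (finite_range fun i => dist (f i o) o).bddAbove
  refine ⟨max R₀ (M / (1 - K)), hR₀.trans (closedBall_subset_closedBall (le_max_left _ _)),
    fun i x hx => ?_⟩
  set R := max R₀ (M / (1 - K))
  have hMR : M ≤ R * (1 - K) := (div_le_iff₀ hK').1 (le_max_right _ _)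
  calc dist (f i x) o ≤ dist (f i x) (f i o) + dist (f i o) o := dist_triangle _ _ _
    _ ≤ K * R + M := add_le_add
        (((hf i).dist_le_mul x o).trans (mul_le_mul_of_nonneg_left hx K.2)) (hM ⟨i, rfl⟩)
    _ ≤ R := by linarith

lemma exists_pos_le_norm_of_isCompact {ι X E : Type*} [Finite ι] [TopologicalSpace X]
    [NormedAddCommGroup E] {g : ι → X → E} {K : Set X} (hK : IsCompact K)
    (hg : ∀ i, ContinuousOn (g i) K) (hne : ∀ i, ∀ x ∈ K, g i x ≠ 0) :
    ∃ c > 0, ∀ i, ∀ x ∈ K, c ≤ ‖g i x‖ := by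
  have hlower (i : ι) : ∃ c > 0, ∀ x ∈ K, c ≤ ‖g i x‖ :=
    hK.exists_forall_le' (hg i).norm fun x hx => norm_pos_iff.2 (hne i x hx)
  choose c hc hcg using hlower
  have hsmall : ∀ᶠ c₀ in 𝓝[>] (0 : ℝ), ∀ i, c₀ ≤ c i :=
    eventually_all.2 fun i => mem_of_superset (Ioc_mem_nhdsGT (hc i)) fun _ h => h.2
  obtain ⟨c₀, hle, hc₀⟩ := (hsmall.and self_mem_nhdsWithin).exists
  exact ⟨c₀, hc₀, fun i x hx => (hle i).trans (hcg i x hx)⟩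

end MetricSpace

section Derivative

lemma continuous_invFun_of_bijective {f : ℝ → ℝ} (hcont : Continuous f) (hbij : Bijective f) :
    Continuous (invFun f) := by
  have hright : RightInverse (invFun f) f := rightInverse_invFun hbij.2
  have hsurj : Surjective (invFun f) := invFun_surjective hbij.1
  rcases hcont.strictMono_of_inj hbij.1 with hmono | hanti
  · have hinv : Monotone (invFun f) := fun x y hxy => by
      rwa [← hmono.le_iff_le, hright, hright]
    exact hinv.continuous_of_surjective hsurj
  · have hinv : Antitone (invFun f) := fun x y hxy => by
      rwa [← hanti.le_iff_ge, hright, hright]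
    exact hinv.dual_right.continuous_of_surjective (OrderDual.toDual.surjective.comp hsurj)

lemma deriv_invFun {f : ℝ → ℝ} {f' x : ℝ} (hcont : Continuous f) (hbij : Bijective f)
    (hderiv : HasDerivAt f f' (invFun f x)) (hf' : f' ≠ 0) : deriv (invFun f) x = f'⁻¹ :=
  (hderiv.of_local_left_inverse (continuous_invFun_of_bijective hcont hbij).continuousAt hf'
    (.of_forall (rightInverse_invFun hbij.2))).deriv

lemma norm_sub_le_exp_mul_of_holder {𝕜 E : Type*} [RCLike 𝕜] [NormedAddCommGroup E]
    [NormedSpace 𝕜 E] {f f' : 𝕜 → E} {H ε c ρ : ℝ} {u z : 𝕜}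
    (hderiv : ∀ x, HasDerivAt f (f' x) x) (hε : 0 ≤ ε) (hH : 0 ≤ H)
    (hholder : ∀ x, ‖f' x - f' u‖ ≤ H * ‖x - u‖ ^ ε) (hc : 0 < c) (hu : c ≤ ‖f' u‖)
    (hz : ‖z - u‖ ≤ ρ) :
    ‖f z - f u‖ ≤ ‖f' u‖ * Real.exp (H / c * ρ ^ ε) * ‖z - u‖ := by
  have hρ : 0 ≤ ρ := (norm_nonneg _).trans hz
  have hder (x : 𝕜) (hx : x ∈ closedBall u ρ) : ‖f' x‖ ≤ ‖f' u‖ + H * ρ ^ ε :=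
    calc ‖f' x‖ ≤ ‖f' u‖ + ‖f' x - f' u‖ := norm_le_norm_add_norm_sub' _ _
      _ ≤ ‖f' u‖ + H * ρ ^ ε := by
        have hxu := mem_closedBall_iff_norm.1 hx
        grw [hholder x, hxu]
  have hexp : ‖f' u‖ + H * ρ ^ ε ≤ ‖f' u‖ * Real.exp (H / c * ρ ^ ε) :=
    calc ‖f' u‖ + H * ρ ^ ε = ‖f' u‖ + c * (H / c * ρ ^ ε) := by field_simp
      _ ≤ ‖f' u‖ + ‖f' u‖ * (H / c * ρ ^ ε) := by gcongr
      _ = ‖f' u‖ * (H / c * ρ ^ ε + 1) := by ring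
      _ ≤ ‖f' u‖ * Real.exp (H / c * ρ ^ ε) := by gcongr; exact Real.add_one_le_exp _
  calc ‖f z - f u‖ ≤ (‖f' u‖ + H * ρ ^ ε) * ‖z - u‖ :=
        (convex_closedBall u ρ).norm_image_sub_le_of_norm_hasDerivWithin_le
          (fun x _ => (hderiv x).hasDerivWithinAt) hder (mem_closedBall_self hρ)
          (mem_closedBall_iff_norm.2 hz)
    _ ≤ ‖f' u‖ * Real.exp (H / c * ρ ^ ε) * ‖z - u‖ := by gcongr

end Derivative

/-- `f` is a `C^{1+ε}` diffeomorphism of `ℝ` with derivative `f'`, contracting with ratio `lam` and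
having distortion controlled by the Hölder constant `H` of `f'`; it may reverse orientation. -/
structure IsContractingDiffeo (lam H ε : ℝ) (f f' : ℝ → ℝ) : Prop where
  bijective : Bijective f
  hasDerivAt : ∀ x, HasDerivAt f (f' x) x
  ne_zero : ∀ x, f' x ≠ 0
  abs_le : ∀ x, |f' x| ≤ lam
  holder : ∀ x y, |f' x - f' y| ≤ H * |x - y| ^ ε

namespace IsContractingDiffeo

variable {lam H ε : ℝ} {f f' : ℝ → ℝ}

lemma ratio_pos (hf : IsContractingDiffeo lam H ε f f') : 0 < lam :=
  (abs_pos.2 (hf.ne_zero 0)).trans_le (hf.abs_le 0)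

lemma holder_const_nonneg (hf : IsContractingDiffeo lam H ε f f') : 0 ≤ H := by
  simpa using (abs_nonneg _).trans (hf.holder 1 0)

lemma continuous (hf : IsContractingDiffeo lam H ε f f') : Continuous f :=
  continuous_iff_continuousAt.2 fun x => (hf.hasDerivAt x).continuousAt

lemma lipschitzWith (hf : IsContractingDiffeo lam H ε f f') : LipschitzWith lam.toNNReal f :=
  lipschitzWith_of_nnnorm_deriv_le (fun x => (hf.hasDerivAt x).differentiableAt) fun x => by
    rw [(hf.hasDerivAt x).deriv, ← norm_toNNReal]
    exact Real.toNNReal_le_toNNReal (hf.abs_le x)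

lemma enorm_deriv_invFun (hf : IsContractingDiffeo lam H ε f f') (x : ℝ) :
    ‖deriv (invFun f) x‖ₑ = ‖f' (invFun f x)‖ₑ⁻¹ := by
  rw [deriv_invFun hf.continuous hf.bijective (hf.hasDerivAt _) (hf.ne_zero _),
    enorm_inv (hf.ne_zero _)]

lemma enorm_rpow_neg_mul_truncatedRieszPotential_le (hf : IsContractingDiffeo lam H ε f f')
    (hε : 0 ≤ ε) {μ : Measure ℝ} {α c : ℝ} (hα : 0 ≤ α) (hc : 0 < c) (ρ : ℝ) {u : ℝ}
    (hu : c ≤ |f' u|) :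
    ‖f' u‖ₑ ^ (-α) * truncatedRieszPotential μ α ρ u ≤
      ENNReal.ofReal (Real.exp (α * (H / c * ρ ^ ε))) *
        truncatedRieszPotential (μ.map f) α (lam * ρ) (f u) := by
  set θ := H / c * ρ ^ ε
  set L : ℝ≥0 := ‖f' u‖₊ * (Real.exp θ).toNNReal with hL
  have hmaps : MapsTo f (closedBall u ρ) (closedBall (f u) (lam * ρ)) := by
    simpa [hf.ratio_pos.le] using hf.lipschitzWith.mapsTo_closedBall u ρ
  have hdistortion (z : ℝ) (hz : z ∈ closedBall u ρ) : edist (f z) (f u) ≤ L * edist z u := by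
    rw [edist_nndist, edist_nndist, ← ENNReal.coe_mul, ENNReal.coe_le_coe, ← NNReal.coe_le_coe]
    simpa [hL, Real.dist_eq, (Real.exp_pos θ).le] using
      norm_sub_le_exp_mul_of_holder hf.hasDerivAt hε hf.holder_const_nonneg
        (fun x => hf.holder x u) hc hu hz
  have hfactor : ‖f' u‖ₑ ^ (-α) = ENNReal.ofReal (Real.exp (α * θ)) * (L : ℝ≥0∞) ^ (-α) := by
    have hcancel : ENNReal.ofReal (Real.exp (α * θ)) * ENNReal.ofReal (Real.exp θ) ^ (-α) = 1 := by
      rw [ENNReal.ofReal_rpow_of_pos (Real.exp_pos _), ← Real.exp_mul,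
        ← ENNReal.ofReal_mul (Real.exp_pos _).le, ← Real.exp_add]
      simp [mul_comm θ]
    rw [hL, ENNReal.coe_mul, ENNReal.mul_rpow_of_ne_top ENNReal.coe_ne_top ENNReal.coe_ne_top,
      mul_left_comm, ← ENNReal.ofReal, hcancel, mul_one, enorm_eq_nnnorm]
  rw [hfactor, mul_assoc]
  gcongr
  exact rpow_neg_mul_truncatedRieszPotential_le_map hf.continuous.measurable hα hmaps hdistortion

end IsContractingDiffeo

section DiffusionOperator

variable {n : ℕ} {α lam H ε : ℝ} {f f' : Fin n → ℝ → ℝ} {p : Fin n → ℝ} {ψ : ℝ → ℝ}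

lemma enorm_D1op_le (hf : ∀ j, IsContractingDiffeo lam H ε (f j) (f' j)) (hp : ∀ j, 0 ≤ p j)
    (hα : 0 ≤ α) (x : ℝ) :
    ‖D1op n α f p ψ x‖ₑ ≤ ∑ j, ENNReal.ofReal (p j) *
      (‖f' j (invFun (f j) x)‖ₑ ^ (-α) * ‖ψ (invFun (f j) x)‖ₑ) := by
  refine (enorm_sum_le _ _).trans_eq (Finset.sum_congr rfl fun j _ => ?_)
  rw [enorm_mul, enorm_mul, Real.enorm_of_nonneg (hp j),
    Real.enorm_rpow_of_nonneg (abs_nonneg _) hα, Real.enorm_abs, (hf j).enorm_deriv_invFun,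
    ENNReal.inv_rpow, ENNReal.rpow_neg, mul_assoc]

lemma support_D1op_subset (hsurj : ∀ j, Surjective (f j)) {K : Set ℝ}
    (hK : ∀ j, MapsTo (f j) K K) (hψ : support ψ ⊆ K) : support (D1op n α f p ψ) ⊆ K := by
  intro x hx
  obtain ⟨j, -, hj⟩ := Finset.exists_ne_zero_of_sum_ne_zero hx
  have hmem : invFun (f j) x ∈ K := hψ (right_ne_zero_of_mul hj)
  simpa only [rightInverse_invFun (hsurj j) x] using hK j hmem

variable {μ : Measure ℝ} {K : Set ℝ} {c ρ : ℝ} {A : ℝ≥0∞}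

lemma enorm_D1op_le_truncatedRieszPotential
    (hf : ∀ j, IsContractingDiffeo lam H ε (f j) (f' j)) (hε : 0 ≤ ε) (hp : ∀ j, 0 ≤ p j)
    (hμ : μ = ∑ j, ENNReal.ofReal (p j) • μ.map (f j)) (hα : 0 ≤ α) (hc : 0 < c)
    (hcK : ∀ j, ∀ x ∈ K, c ≤ |f' j x|) (hψK : support ψ ⊆ K)
    (hψ : ∀ x, ‖ψ x‖ₑ ≤ A * truncatedRieszPotential μ α ρ x) (x : ℝ) :
    ‖D1op n α f p ψ x‖ₑ ≤ A * ENNReal.ofReal (Real.exp (α * (H / c * ρ ^ ε))) *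
      truncatedRieszPotential μ α (lam * ρ) x := by
  set E := ENNReal.ofReal (Real.exp (α * (H / c * ρ ^ ε)))
  have hbranch (j : Fin n) :
      ‖f' j (invFun (f j) x)‖ₑ ^ (-α) * ‖ψ (invFun (f j) x)‖ₑ ≤
        A * E * truncatedRieszPotential (μ.map (f j)) α (lam * ρ) x := by
    set u := invFun (f j) x
    have hfu : f j u = x := rightInverse_invFun (hf j).bijective.2 x
    by_cases huK : u ∈ K
    · calc ‖f' j u‖ₑ ^ (-α) * ‖ψ u‖ₑ
          ≤ ‖f' j u‖ₑ ^ (-α) * (A * truncatedRieszPotential μ α ρ u) := by gcongr; exact hψ u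
        _ = A * (‖f' j u‖ₑ ^ (-α) * truncatedRieszPotential μ α ρ u) := mul_left_comm _ _ _
        _ ≤ A * (E * truncatedRieszPotential (μ.map (f j)) α (lam * ρ) (f j u)) :=
            mul_le_mul_right ((hf j).enorm_rpow_neg_mul_truncatedRieszPotential_le hε hα hc ρ
              (hcK j u huK)) _
        _ = A * E * truncatedRieszPotential (μ.map (f j)) α (lam * ρ) x := by
            rw [hfu, mul_assoc]
    · simp [notMem_support.1 (notMem_subset hψK huK)]
  calc ‖D1op n α f p ψ x‖ₑ
      ≤ ∑ j, ENNReal.ofReal (p j) *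
          (A * E * truncatedRieszPotential (μ.map (f j)) α (lam * ρ) x) :=
        (enorm_D1op_le hf hp hα x).trans
          (Finset.sum_le_sum fun j _ => mul_le_mul_right (hbranch j) _)
    _ = A * E * truncatedRieszPotential μ α (lam * ρ) x := by
        conv_rhs => rw [hμ, truncatedRieszPotential_finsetSum_smul, Finset.mul_sum]
        simp only [mul_left_comm]

lemma enorm_iterate_D1op_le_truncatedRieszPotential
    (hf : ∀ j, IsContractingDiffeo lam H ε (f j) (f' j)) (hε : 0 < ε) (hlam0 : 0 ≤ lam)
    (hlam1 : lam < 1) (hp : ∀ j, 0 ≤ p j) (hμ : μ = ∑ j, ENNReal.ofReal (p j) • μ.map (f j))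
    (hα : 0 ≤ α) (hK : ∀ j, MapsTo (f j) K K) (hc : 0 < c) (hcK : ∀ j, ∀ x ∈ K, c ≤ |f' j x|)
    (hH : 0 ≤ H) (hρ : 0 ≤ ρ) (hψK : support ψ ⊆ K)
    (hψ : ∀ x, ‖ψ x‖ₑ ≤ A * truncatedRieszPotential μ α ρ x) (m : ℕ) (x : ℝ) :
    ‖(D1op n α f p)^[m] ψ x‖ₑ ≤
      A * ENNReal.ofReal (Real.exp (α * (H / c * ρ ^ ε) / (1 - lam ^ ε))) *
        truncatedRieszPotential μ α (lam ^ m * ρ) x := by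
  have hratio : 0 < 1 - lam ^ ε := sub_pos.2 (Real.rpow_lt_one hlam0 hlam1 hε)
  induction m generalizing ψ A ρ with
  | zero =>
    have hexp : 1 ≤ ENNReal.ofReal (Real.exp (α * (H / c * ρ ^ ε) / (1 - lam ^ ε))) :=
      ENNReal.one_le_ofReal.2 (Real.one_le_exp (by positivity))
    calc ‖ψ x‖ₑ ≤ A * 1 * truncatedRieszPotential μ α ρ x := by simpa using hψ x
      _ ≤ _ := by simp only [pow_zero, one_mul]; gcongr
  | succ m ih =>
    -- The bound is a fixed point: one step adds `α * (H / c * ρ ^ ε)` and leaves radius `lam * ρ`.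
    have hexp : α * (H / c * ρ ^ ε) + α * (H / c * (lam * ρ) ^ ε) / (1 - lam ^ ε) =
        α * (H / c * ρ ^ ε) / (1 - lam ^ ε) := by
      rw [Real.mul_rpow hlam0 hρ]
      field_simp
      ring
    have hiter := ih (mul_nonneg hlam0 hρ)
      (support_D1op_subset (fun j => (hf j).bijective.2) hK hψK)
      (enorm_D1op_le_truncatedRieszPotential hf hε.le hp hμ hα hc hcK hψK hψ)
    rwa [mul_assoc A, ← ENNReal.ofReal_mul (Real.exp_pos _).le, ← Real.exp_add, hexp,
      ← mul_assoc (lam ^ m), ← pow_succ] at hiter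

end DiffusionOperator

theorem iterates_indicator_tend_to_zero_general {n : ℕ} {α β C lam H ε M : ℝ}
    {f f' : Fin n → ℝ → ℝ} (hf : ∀ j, IsContractingDiffeo lam H ε (f j) (f' j)) (hε : 0 < ε)
    (hlam : lam < 1) {p : Fin n → ℝ} (hp : ∀ j, 0 ≤ p j) {μ : Measure ℝ} [NeZero μ]
    (hμ : μ = ∑ j, ENNReal.ofReal (p j) • μ.map (f j)) (hα : 0 ≤ α) (hαβ : α < β) (hC : 0 ≤ C)
    (hreg : ∀ x, ∀ ρ > 0, μ (closedBall x ρ) ≤ ENNReal.ofReal (C * ρ ^ β))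
    {ψ : ℝ → ℝ} (hψM : ∀ x, |ψ x| ≤ M) (hψ : IsBounded (support ψ)) :
    TendstoUniformly (fun m => (D1op n α f p)^[m] ψ) 0 atTop := by
  obtain ⟨j₀⟩ : Nonempty (Fin n) := by
    by_contra! hempty
    exact NeZero.ne μ (by simpa using hμ)
  have hlam0 : 0 < lam := (hf j₀).ratio_pos
  obtain ⟨R, hψR, hR⟩ := exists_mapsTo_closedBall_of_lipschitzWith (by simpa using hlam)
    (fun j => (hf j).lipschitzWith) 0 hψ
  obtain ⟨c, hc, hcR⟩ := exists_pos_le_norm_of_isCompact (isCompact_closedBall 0 R)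
    (fun j => (continuous_of_dist_le_mul_rpow hε (hf j).holder).continuousOn)
    fun j x _ => (hf j).ne_zero x
  obtain ⟨ρ, hρ, A, hA, hψA⟩ := exists_enorm_le_mul_truncatedRieszPotential (μ := μ) hα hψM hψ
  have hradius : Tendsto (fun m : ℕ => lam ^ m * ρ) atTop (𝓝 0) := by
    simpa using (tendsto_pow_atTop_nhds_zero_of_lt_one hlam0.le hlam).mul_const ρ
  refine tendstoUniformly_zero_of_enorm_le (fun m x =>
    (enorm_iterate_D1op_le_truncatedRieszPotential hf hε hlam0.le hlam hp hμ hα hR hc hcR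
      (hf j₀).holder_const_nonneg hρ.le hψR hψA m x).trans (mul_le_mul_right
        (truncatedRieszPotential_le_of_measure_closedBall_le (q := 1 / 2) hα hαβ hC (by norm_num)
          (by norm_num) (by positivity) (hreg x)) _)) ?_
  simpa using ENNReal.Tendsto.const_mul
    ((tendsto_ofReal_const_mul_rpow_zero _ (sub_pos.2 hαβ)).comp hradius)
    (.inr (ENNReal.mul_ne_top hA ENNReal.ofReal_ne_top))

/-- Lemma: for an iterated function scheme of uniformly contracting `C^{1+ε}`
orientation-preserving diffeomorphisms preserving a compact interval `J = [a,b]`, if the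
stationary measure `μ` is `ᾱ`-regular for some `ᾱ > α`, then there is `r > 0` such that
the iterates of the indicator of the closed `r`-neighbourhood `B_r(J)` under the
asymmetric diffusion operator `D^{(1)}_{α,T}` converge uniformly to zero. -/
theorem iterates_indicator_tend_to_zero (n : ℕ) (a b : ℝ) (hab : a ≤ b)
    (ε lamMax : ℝ) (hε : 0 < ε) (hlam : lamMax < 1)
    (f : Fin n → ℝ → ℝ) (f' : Fin n → ℝ → ℝ)
    (hbij : ∀ j, Function.Bijective (f j))
    (hderiv : ∀ j x, HasDerivAt (f j) (f' j x) x)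
    (hpos : ∀ j x, 0 < f' j x)
    (hle : ∀ j x, f' j x ≤ lamMax)
    (Ch : ℝ) (hholder : ∀ j x y, |f' j x - f' j y| ≤ Ch * |x - y| ^ ε)
    (hmaps : ∀ j, ∀ x ∈ Set.Icc a b, f j x ∈ Set.Icc a b)
    (p : Fin n → ℝ) (hp : ∀ j, 0 < p j) (hpsum : ∑ j, p j = 1)
    (μ : Measure ℝ) [IsProbabilityMeasure μ]
    (hμ : μ = ∑ j, ENNReal.ofReal (p j) • Measure.map (f j) μ)
    (α αbar C : ℝ) (hα : 0 < α) (hαbar : α < αbar) (hC : 0 < C)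
    (hreg : ∀ (x ρ : ℝ), 0 < ρ →
      μ (Metric.closedBall x ρ) ≤ ENNReal.ofReal (C * ρ ^ αbar)) :
    ∃ r : ℝ, 0 < r ∧
      TendstoUniformly
        (fun (m : ℕ) (x : ℝ) =>
          (D1op n α f p)^[m] ((Metric.cthickening r (Set.Icc a b)).indicator 1) x)
        0 Filter.atTop := by
  have hf (j : Fin n) : IsContractingDiffeo lamMax Ch ε (f j) (f' j) :=
    ⟨hbij j, hderiv j, fun x => (hpos j x).ne', fun x => (abs_of_pos (hpos j x)).trans_le (hle j x),
      hholder j⟩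
  refine ⟨1, one_pos, iterates_indicator_tend_to_zero_general (M := 1) hf hε hlam
    (fun j => (hp j).le) hμ hα.le hαbar hC.le hreg (fun x => ?_) ?_⟩
  · by_cases hx : x ∈ cthickening 1 (Icc a b) <;> simp [hx]
  · exact (isBounded_Icc a b).cthickening.subset support_indicator_subset
end

section
/- Let 0 < ε < 1, set δ := 2ε − ε², and define f_ε : ℝ → ℝ by f_ε(x) := exp(−δ(1 − ε)² x²). Then for every x ∈ ℝ, (1/4)·( f_ε((x+1)/(1−ε)) + f_ε((x−1)/(1−ε)) + 2 f_ε(x/(1−ε)) ) ≤ ((1 + e^{−δ})/2) · f_ε(x). In particular, for every u ∈ ℝ one has 1/2 + (1/2)·cosh(2u) ≤ exp(u²). -/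
/-!
Expanding the squares in `exp (-(a * (x ± h) ^ 2))` and adding, the cross terms combine into a
hyperbolic cosine. With `q := exp (-(a * h ^ 2))` and `u := a * h * x`, the average over the steps
`h`, `-h`, `0`, `0` is `exp (-(a * x ^ 2)) / 2 * (1 + q * cosh (2 * u))`. The last factor equals
`(1 - q) * 1 + 2 * q * cosh u ^ 2`, where both `1` and `cosh u ^ 2` are at most `exp (u ^ 2)`;
since `0 ≤ q ≤ 1`, it is at most `(1 + q) * exp (u ^ 2)`.
For the test function, `a = δ` and `h = 1`, and `(1 - ε) ^ 2 = 1 - δ` makes the resulting Gaussian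
the original one.
-/

section

open Real

theorem cosh_sq_le_exp_sq (u : ℝ) : cosh u ^ 2 ≤ exp (u ^ 2) :=
  calc
    cosh u ^ 2 ≤ exp (u ^ 2 / 2) ^ 2 :=
      pow_le_pow_left₀ (cosh_pos u).le (cosh_le_exp_half_sq u) 2
    _ = exp (u ^ 2) := by rw [← exp_nat_mul]; congr 1; push_cast; ring

theorem half_add_half_cosh_two_mul_eq_cosh_sq (u : ℝ) :
    1 / 2 + 1 / 2 * cosh (2 * u) = cosh u ^ 2 := by
  rw [cosh_two_mul, cosh_sq]; ring

theorem half_add_half_cosh_two_mul_le_exp_sq (u : ℝ) :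
    1 / 2 + 1 / 2 * cosh (2 * u) ≤ exp (u ^ 2) :=
  (half_add_half_cosh_two_mul_eq_cosh_sq u).trans_le (cosh_sq_le_exp_sq u)

theorem one_add_mul_cosh_two_mul_le {q : ℝ} (hq0 : 0 ≤ q) (hq1 : q ≤ 1) (u : ℝ) :
    1 + q * cosh (2 * u) ≤ (1 + q) * exp (u ^ 2) :=
  calc
    1 + q * cosh (2 * u) = (1 - q) * 1 + 2 * q * (1 / 2 + 1 / 2 * cosh (2 * u)) := by ring
    _ ≤ (1 - q) * exp (u ^ 2) + 2 * q * exp (u ^ 2) := by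
      gcongr
      · exact one_le_exp (sq_nonneg u)
      · exact half_add_half_cosh_two_mul_le_exp_sq u
    _ = (1 + q) * exp (u ^ 2) := by ring

theorem exp_neg_mul_add_sq_add_exp_neg_mul_sub_sq (a h x : ℝ) :
    exp (-(a * (x + h) ^ 2)) + exp (-(a * (x - h) ^ 2)) =
      2 * exp (-(a * x ^ 2)) * exp (-(a * h ^ 2)) * cosh (2 * (a * h * x)) := by
  have h_add : -(a * (x + h) ^ 2) = -(a * x ^ 2) + -(a * h ^ 2) + -(2 * (a * h * x)) := by ring
  have h_sub : -(a * (x - h) ^ 2) = -(a * x ^ 2) + -(a * h ^ 2) + 2 * (a * h * x) := by ring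
  rw [h_add, h_sub, cosh_eq]
  simp only [exp_add]
  ring

theorem gaussian_average_translates_le {a : ℝ} (ha : 0 ≤ a) (h x : ℝ) :
    1 / 4 * (exp (-(a * (x + h) ^ 2)) + exp (-(a * (x - h) ^ 2)) + 2 * exp (-(a * x ^ 2))) ≤
      (1 + exp (-(a * h ^ 2))) / 2 * exp (-(a * (1 - a * h ^ 2) * x ^ 2)) := by
  have hq : exp (-(a * h ^ 2)) ≤ 1 := exp_le_one_iff.mpr (neg_nonpos.mpr (by positivity))
  calc
    _ = exp (-(a * x ^ 2)) / 2 * (1 + exp (-(a * h ^ 2)) * cosh (2 * (a * h * x))) := by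
      rw [exp_neg_mul_add_sq_add_exp_neg_mul_sub_sq]; ring
    _ ≤ exp (-(a * x ^ 2)) / 2 * ((1 + exp (-(a * h ^ 2))) * exp ((a * h * x) ^ 2)) := by
      gcongr
      exact one_add_mul_cosh_two_mul_le (exp_pos _).le hq _
    _ = (1 + exp (-(a * h ^ 2))) / 2 * (exp (-(a * x ^ 2)) * exp ((a * h * x) ^ 2)) := by ring
    _ = _ := by rw [← exp_add]; congr 2; ring

theorem gaussian_test_function_estimate_general {ε : ℝ} (hε : ε ∈ Set.Icc 0 2) (hε1 : ε ≠ 1)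
    (x : ℝ) :
    1 / 4 * (exp (-((2 * ε - ε ^ 2) * (1 - ε) ^ 2 * ((x + 1) / (1 - ε)) ^ 2))
        + exp (-((2 * ε - ε ^ 2) * (1 - ε) ^ 2 * ((x - 1) / (1 - ε)) ^ 2))
        + 2 * exp (-((2 * ε - ε ^ 2) * (1 - ε) ^ 2 * (x / (1 - ε)) ^ 2)))
      ≤ (1 + exp (-(2 * ε - ε ^ 2))) / 2 *
          exp (-((2 * ε - ε ^ 2) * (1 - ε) ^ 2 * x ^ 2)) := by
  have hδ : 0 ≤ 2 * ε - ε ^ 2 := by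
    linarith only [mul_nonneg hε.1 (sub_nonneg.mpr hε.2)]
  have hscale (y : ℝ) : (2 * ε - ε ^ 2) * (1 - ε) ^ 2 * (y / (1 - ε)) ^ 2 =
      (2 * ε - ε ^ 2) * y ^ 2 := by
    rw [mul_assoc, ← mul_pow, mul_div_cancel₀ y (sub_ne_zero.mpr hε1.symm)]
  have hratio : (1 - ε) ^ 2 = 1 - (2 * ε - ε ^ 2) * 1 ^ 2 := by ring
  simp only [hscale]
  simpa only [hratio, one_pow, mul_one] using gaussian_average_translates_le hδ 1 x

end

/-- The key estimate of Theorem 1.8: for `0 < ε < 1`, `δ := 2ε − ε²` and the Gaussian test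
function `f_ε(x) := exp(−δ(1−ε)²x²)`, one has
`(1/4)(f_ε((x+1)/(1−ε)) + f_ε((x−1)/(1−ε)) + 2f_ε(x/(1−ε))) ≤ ((1+e^{−δ})/2)·f_ε(x)`
for all real `x`; in particular `1/2 + (1/2)cosh(2u) ≤ exp(u²)` for every real `u`. -/
theorem gaussian_test_function_estimate (ε : ℝ) (hε0 : 0 < ε) (hε1 : ε < 1) :
    (∀ x : ℝ,
      1 / 4 * (Real.exp (-((2 * ε - ε ^ 2) * (1 - ε) ^ 2 * ((x + 1) / (1 - ε)) ^ 2))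
          + Real.exp (-((2 * ε - ε ^ 2) * (1 - ε) ^ 2 * ((x - 1) / (1 - ε)) ^ 2))
          + 2 * Real.exp (-((2 * ε - ε ^ 2) * (1 - ε) ^ 2 * (x / (1 - ε)) ^ 2)))
        ≤ (1 + Real.exp (-(2 * ε - ε ^ 2))) / 2 *
            Real.exp (-((2 * ε - ε ^ 2) * (1 - ε) ^ 2 * x ^ 2))) ∧
    ∀ u : ℝ, 1 / 2 + 1 / 2 * Real.cosh (2 * u) ≤ Real.exp (u ^ 2) := by
  exact ⟨gaussian_test_function_estimate_general ⟨hε0.le, by linarith⟩ hε1.ne,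
    half_add_half_cosh_two_mul_le_exp_sq⟩
end
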